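/- arXiv:math/0411347 — 7 statements merged into one kernel-verified Lean document; each statement's English description precedes it below -/
import Mathlib

section
/- Thompson's group F admits a finite presentation with two generators and two relations: F is isomorphic to the group presented by generators a, b subject to the relations a⁻²ba² = b⁻¹a⁻¹ba b and a⁻³ba³ = b⁻¹a⁻²ba²b (i.e., b^{a·a} = b^{a·b} and b^{a·a·a} = b^{a·a·b}, where x^y := y⁻¹xy and x^{yz} := (x^y)^z), via an isomorphism sending a to x₀ and b to x₁. -/
/-- The defining relations of Thompson's group `F`:
`xᵢ⁻¹ xₙ xᵢ xₙ₊₁⁻¹` for all natural numbers `i < n`. -/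
def thompsonRels : Set (FreeGroup ℕ) :=
  {r | ∃ i n : ℕ, i < n ∧
    r = (FreeGroup.of i)⁻¹ * FreeGroup.of n * FreeGroup.of i * (FreeGroup.of (n + 1))⁻¹}

/-- Thompson's group `F`. -/
abbrev ThompsonF : Type := PresentedGroup thompsonRels

/-- The image of the `n`-th generator in Thompson's group `F`. -/
def x (n : ℕ) : ThompsonF := PresentedGroup.of n

/-- Conjugation `u ^ v = v⁻¹ * u * v` in the free group on two generators. -/
def cnj (u v : FreeGroup (Fin 2)) : FreeGroup (Fin 2) := v⁻¹ * u * v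

/-- The generator `a`. -/
def a : FreeGroup (Fin 2) := FreeGroup.of 0

/-- The generator `b`. -/
def b : FreeGroup (Fin 2) := FreeGroup.of 1

/-- The two relations `b^{a·a} = b^{a·b}` and `b^{a·a·a} = b^{a·a·b}`, written as words
that must die in the presented group. -/
def thompsonRels₂ : Set (FreeGroup (Fin 2)) :=
  {cnj (cnj b a) a * (cnj (cnj b a) b)⁻¹,
   cnj (cnj (cnj b a) a) a * (cnj (cnj (cnj b a) a) b)⁻¹}

def zz {G : Type*} [Group G] (s t : G) : ℕ → G
  | 0 => t
  | n + 1 => s⁻¹ * zz s t n * s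

lemma zz_rel {G : Type*} [Group G] (s t : G)
    (h1 : t⁻¹ * zz s t 1 * t = zz s t 2) (h2 : t⁻¹ * zz s t 2 * t = zz s t 3) (k : ℕ) :
    ∀ m, (zz s t m)⁻¹ * zz s t (m + k + 1) * zz s t m = zz s t (m + k + 2) := by
  induction k using Nat.strong_induction_on with
  | _ k ih =>
    intro m
    induction m with
    | succ m ihm =>
      have e1 : m + 1 + k + 1 = (m + k + 1) + 1 := by omega
      have e2 : m + 1 + k + 2 = (m + k + 2) + 1 := by omega
      rw [e1, e2]
      change (s⁻¹ * zz s t m * s)⁻¹ * (s⁻¹ * zz s t (m + k + 1) * s) * (s⁻¹ * zz s t m * s) =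
        s⁻¹ * zz s t (m + k + 2) * s
      rw [← ihm]
      group
    | zero =>
      match k, ih with
      | 0, _ => exact h1
      | 1, _ => exact h2
      | k + 2, ih =>
        have a1 := ih k (by omega) 1
        have a2 := ih k (by omega) 2
        have a3 := ih (k + 1) (by omega) 0
        rw [show 1 + k + 1 = k + 2 by omega, show 1 + k + 2 = k + 3 by omega] at a1
        rw [show 2 + k + 1 = k + 3 by omega, show 2 + k + 2 = k + 4 by omega] at a2
        rw [show 0 + (k + 1) + 1 = k + 2 by omega, show 0 + (k + 1) + 2 = k + 3 by omega] at a3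
        rw [show 0 + (k + 2) + 1 = k + 3 by omega, show 0 + (k + 2) + 2 = k + 4 by omega]
        change t⁻¹ * _ * t = _ at a3
        change t⁻¹ * _ * t = _
        rw [← a2]
        conv_rhs => rw [← a3, ← h1]
        rw [← a1]
        group

def yy {G : Type*} [Group G] (s t : G) : ℕ → G
  | 0 => s
  | n + 1 => zz s t n

lemma yy_rel {G : Type*} [Group G] (s t : G)
    (h1 : t⁻¹ * zz s t 1 * t = zz s t 2) (h2 : t⁻¹ * zz s t 2 * t = zz s t 3)
    (i n : ℕ) (h : i < n) : (yy s t i)⁻¹ * yy s t n * yy s t i = yy s t (n + 1) := by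
  obtain ⟨k, rfl⟩ := Nat.exists_eq_add_of_lt h
  cases i with
  | zero => simp only [Nat.zero_add]; rfl
  | succ m =>
    have := zz_rel s t h1 h2 k m
    rw [show m + 1 + k + 1 = (m + k + 1) + 1 by omega]
    exact this

lemma x_rel (i n : ℕ) (h : i < n) : (x i)⁻¹ * x n * x i = x (n + 1) := by
  have : (PresentedGroup.mk thompsonRels)
      ((FreeGroup.of i)⁻¹ * FreeGroup.of n * FreeGroup.of i * (FreeGroup.of (n + 1))⁻¹) = 1 :=
    PresentedGroup.one_of_mem ⟨i, n, h, rfl⟩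
  simp only [map_mul, map_inv] at this
  exact mul_inv_eq_one.mp this

lemma x_zz (n : ℕ) : zz (x 0) (x 1) n = x (n + 1) := by
  induction n with
  | zero => rfl
  | succ n ih => rw [zz, ih, x_rel 0 (n + 1) (by omega)]

lemma x_yy (n : ℕ) : yy (x 0) (x 1) n = x n := by
  cases n with
  | zero => rfl
  | succ n => exact x_zz n

abbrev G2 : Type := PresentedGroup thompsonRels₂
def ga : G2 := PresentedGroup.of 0
def gb : G2 := PresentedGroup.of 1

lemma g_rel1 : gb⁻¹ * zz ga gb 1 * gb = zz ga gb 2 := by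
  have : (PresentedGroup.mk thompsonRels₂) (cnj (cnj b a) a * (cnj (cnj b a) b)⁻¹) = 1 :=
    PresentedGroup.one_of_mem (Or.inl rfl)
  simp only [cnj, map_mul, map_inv] at this
  rw [mul_inv_eq_one] at this
  exact this.symm

lemma g_rel2 : gb⁻¹ * zz ga gb 2 * gb = zz ga gb 3 := by
  have : (PresentedGroup.mk thompsonRels₂)
      (cnj (cnj (cnj b a) a) a * (cnj (cnj (cnj b a) a) b)⁻¹) = 1 :=
    PresentedGroup.one_of_mem (Or.inr rfl)
  simp only [cnj, map_mul, map_inv] at this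
  rw [mul_inv_eq_one] at this
  exact this.symm

lemma map_zz {G H : Type*} [Group G] [Group H] (f : G →* H) (s t : G) (n : ℕ) :
    f (zz s t n) = zz (f s) (f t) n := by
  induction n with
  | zero => rfl
  | succ n ih => simp [zz, ih]

lemma map_yy {G H : Type*} [Group G] [Group H] (f : G →* H) (s t : G) (n : ℕ) :
    f (yy s t n) = yy (f s) (f t) n := by
  cases n with
  | zero => rfl
  | succ n => exact map_zz f s t n

lemma fwd_rels : ∀ r ∈ thompsonRels₂, FreeGroup.lift (fun i : Fin 2 => x i.val) r = 1 := by
  rintro r (rfl | rfl)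
  · have h := x_rel 1 2 (by omega)
    rw [← x_zz 1, ← x_zz 2] at h
    simp only [cnj, a, b, map_mul, map_inv, FreeGroup.lift_apply_of]
    rw [mul_inv_eq_one]
    exact h.symm
  · have h := x_rel 1 3 (by omega)
    rw [← x_zz 2, ← x_zz 3] at h
    simp only [cnj, a, b, map_mul, map_inv, FreeGroup.lift_apply_of]
    rw [mul_inv_eq_one]
    exact h.symm

lemma bwd_rels : ∀ r ∈ thompsonRels, FreeGroup.lift (yy ga gb) r = 1 := by
  rintro r ⟨i, n, h, rfl⟩
  simp only [map_mul, map_inv, FreeGroup.lift_apply_of]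
  rw [mul_inv_eq_one]
  exact yy_rel ga gb g_rel1 g_rel2 i n h

def fwd : G2 →* ThompsonF := PresentedGroup.toGroup fwd_rels
def bwd : ThompsonF →* G2 := PresentedGroup.toGroup bwd_rels

lemma fwd_a : fwd ga = x 0 := PresentedGroup.toGroup.of fwd_rels
lemma fwd_b : fwd gb = x 1 := PresentedGroup.toGroup.of fwd_rels
lemma bwd_x (n : ℕ) : bwd (x n) = yy ga gb n := PresentedGroup.toGroup.of bwd_rels

lemma bwd_fwd : bwd.comp fwd = MonoidHom.id _ := by
  apply PresentedGroup.ext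
  intro i
  fin_cases i
  · change bwd (fwd ga) = ga
    rw [fwd_a, bwd_x]; rfl
  · change bwd (fwd gb) = gb
    rw [fwd_b, bwd_x]; rfl

lemma fwd_bwd : fwd.comp bwd = MonoidHom.id _ := by
  apply PresentedGroup.ext
  intro n
  change fwd (bwd (x n)) = x n
  rw [bwd_x, map_yy, fwd_a, fwd_b, x_yy]

/-- Thompson's group `F` admits the finite presentation with two generators `a, b` and the
two relations `b^{a·a} = b^{a·b}`, `b^{a·a·a} = b^{a·a·b}`, via an isomorphism sending
`a ↦ x₀` and `b ↦ x₁`. -/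
theorem thompsonF_two_generator_two_relation_presentation :
    ∃ e : PresentedGroup thompsonRels₂ ≃* ThompsonF,
      e (PresentedGroup.of 0) = x 0 ∧ e (PresentedGroup.of 1) = x 1 := by
  exact ⟨MonoidHom.toMulEquiv fwd bwd bwd_fwd fwd_bwd, fwd_a, fwd_b⟩
end

section
/- There is an injective group homomorphism φ : F → F (the shift) satisfying φ(x_n) = x_{n+1} for all n ≥ 0, and φ is idempotent up to conjugacy: φ(φ(f)) = x₀⁻¹ · φ(f) · x₀ for every f ∈ F. -/
theorem tF_rel {i n : ℕ} (h : i < n) : x n * x i = x i * x (n + 1) := by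
  have h1 : (PresentedGroup.mk thompsonRels) ((FreeGroup.of i)⁻¹ * FreeGroup.of n * FreeGroup.of i *
      (FreeGroup.of (n + 1))⁻¹) = 1 :=
    PresentedGroup.one_of_mem ⟨i, n, h, rfl⟩
  simp only [map_mul, map_inv] at h1
  change (x i)⁻¹ * x n * x i * (x (n+1))⁻¹ = 1 at h1
  rw [mul_inv_eq_one] at h1
  rw [← h1]; group

theorem tF_lift {G : Type} [Group G] (y : ℕ → G)
    (hy : ∀ i n, i < n → y n * y i = y i * y (n + 1)) :
    ∃ f : ThompsonF →* G, ∀ n, f (x n) = y n := by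
  have h : ∀ r ∈ thompsonRels, FreeGroup.lift y r = 1 := by
    rintro r ⟨i, n, hin, rfl⟩
    simp only [map_mul, map_inv, FreeGroup.lift_apply_of]
    rw [mul_inv_eq_one, mul_assoc, hy i n hin]; group
  exact ⟨PresentedGroup.toGroup h, fun n => PresentedGroup.toGroup.of h⟩

theorem tF_closure : Subgroup.closure (Set.range x) = ⊤ :=
  PresentedGroup.closure_range_of thompsonRels

theorem tF_top (H : Subgroup ThompsonF) (h : ∀ n, x n ∈ H) (g : ThompsonF) : g ∈ H := by
  have : (⊤ : Subgroup ThompsonF) ≤ H := by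
    rw [← tF_closure, Subgroup.closure_le]
    rintro _ ⟨n, rfl⟩; exact h n
  exact this trivial

/-- piecewise linear map -/
def plPerm (n : ℕ) : Equiv.Perm ℚ where
  toFun t := if t ≤ n then t else if t ≤ n + 1 then 2 * t - n else t + 1
  invFun t := if t ≤ n then t else if t ≤ n + 2 then (t + n) / 2 else t - 1
  left_inv t := by
    dsimp only
    split_ifs <;> linarith
  right_inv t := by
    dsimp only
    split_ifs <;> linarith

theorem plPerm_rel {i n : ℕ} (h : i < n) : plPerm i * plPerm n = plPerm (n + 1) * plPerm i := by
  have h' : (i : ℚ) + 1 ≤ n := by exact_mod_cast h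
  ext t
  simp only [Equiv.Perm.mul_apply, plPerm, Equiv.coe_fn_mk, Nat.cast_add, Nat.cast_one]
  split_ifs <;> linarith

theorem plPerm_pow (a : ℕ) : (plPerm 1 ^ a) 2 = 2 + a := by
  induction a with
  | zero => simp
  | succ k ih =>
    rw [pow_succ', Equiv.Perm.mul_apply, ih]
    have : (0 : ℚ) ≤ k := Nat.cast_nonneg k
    simp only [plPerm, Equiv.coe_fn_mk, Nat.cast_add, Nat.cast_one]
    split_ifs <;> linarith

theorem plPerm_fix (n : ℕ) : plPerm (n + 2) 2 = 2 := by
  have : (0 : ℚ) ≤ n := Nat.cast_nonneg n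
  simp [plPerm]

theorem thompsonF_shift_conjugacy_idempotent :
    ∃ φ : ThompsonF →* ThompsonF, Function.Injective φ ∧
      (∀ n : ℕ, φ (x n) = x (n + 1)) ∧
      (∀ f : ThompsonF, φ (φ f) = (x 0)⁻¹ * φ f * x 0) := by
  obtain ⟨φ, hφ⟩ := tF_lift (fun n => x (n + 1)) (fun i n h => tF_rel (Nat.succ_lt_succ h))
  obtain ⟨ρ, hρ⟩ := tF_lift (fun n => (plPerm n)⁻¹) (fun i n h => by
    rw [← mul_inv_rev, ← mul_inv_rev, plPerm_rel h])
  have hc : ∀ f : ThompsonF, φ (φ f) = (x 0)⁻¹ * φ f * x 0 := by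
    intro f
    have := tF_top ((φ.comp φ).eqLocus ((MulAut.conj (x 0)⁻¹).toMonoidHom.comp φ)) (fun n => by
      change φ (φ (x n)) = (x 0)⁻¹ * φ (x n) * ((x 0)⁻¹)⁻¹
      rw [hφ, hφ, mul_assoc, inv_inv, tF_rel (Nat.succ_pos n)]; group) f
    change φ (φ f) = (x 0)⁻¹ * φ f * ((x 0)⁻¹)⁻¹ at this
    rwa [inv_inv] at this
  have hc' : ∀ f, φ f * x 0 = x 0 * φ (φ f) := by
    intro f; rw [hc]; group
  have hpow : ∀ (a : ℕ) (h : ThompsonF), ∃ h', φ h * x 0 ^ a = x 0 ^ a * φ h' := by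
    intro a
    induction a with
    | zero => intro h; exact ⟨h, by simp⟩
    | succ k ih =>
      intro h
      obtain ⟨h', e⟩ := ih h
      exact ⟨φ h', by rw [pow_succ, ← mul_assoc, e, mul_assoc, hc', mul_assoc]⟩
  have hdec : ∀ f : ThompsonF, ∃ (a b : ℕ) (g : ThompsonF), f = x 0 ^ a * φ g * (x 0 ^ b)⁻¹ := by
    have hm : ∀ (h : ThompsonF) (y : ThompsonF),
        (∃ (a b : ℕ) (g : ThompsonF), y = x 0 ^ a * φ g * (x 0 ^ b)⁻¹) →
        (∃ (a b : ℕ) (g : ThompsonF), φ h * y = x 0 ^ a * φ g * (x 0 ^ b)⁻¹) := by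
      rintro h y ⟨a, b, g, rfl⟩
      obtain ⟨h', e⟩ := hpow a h
      exact ⟨a, b, h' * g, by rw [← mul_assoc, ← mul_assoc, e, map_mul]; group⟩
    intro f
    have hf : f ∈ Subgroup.closure (Set.range x) := by rw [tF_closure]; trivial
    induction hf using Subgroup.closure_induction_left with
    | one => exact ⟨0, 0, 1, by simp⟩
    | mul_left y hy z hz ih =>
      obtain ⟨n, rfl⟩ := hy
      cases n with
      | zero =>
        obtain ⟨a, b, g, rfl⟩ := ih
        exact ⟨a + 1, b, g, by rw [pow_succ']; simp only [mul_assoc]⟩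
      | succ n => rw [← hφ]; exact hm _ _ ih
    | inv_mul_cancel y hy z hz ih =>
      obtain ⟨n, rfl⟩ := hy
      cases n with
      | zero =>
        obtain ⟨a, b, g, rfl⟩ := ih
        cases a with
        | zero => exact ⟨0, b + 1, φ g, by rw [hc, pow_succ]; group⟩
        | succ a => exact ⟨a, b, g, by rw [pow_succ']; simp only [mul_assoc, inv_mul_cancel_left]⟩
      | succ n => rw [← hφ, ← map_inv]; exact hm _ _ ih
  have hfix : ∀ g, ρ (φ (φ g)) 2 = 2 := by
    intro g
    exact tF_top ((MulAction.stabilizer (Equiv.Perm ℚ) (2 : ℚ)).comap (ρ.comp (φ.comp φ)))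
      (fun n => by
        change ρ (φ (φ (x n))) 2 = 2
        rw [hφ, hφ, hρ, Equiv.Perm.inv_eq_iff_eq]
        exact (plPerm_fix n).symm) g
  refine ⟨φ, ?_, hφ, hc⟩
  rw [injective_iff_map_eq_one]
  intro f hf
  obtain ⟨a, b, g, rfl⟩ := hdec f
  have h1 : φ (φ g) = (x 1 ^ a)⁻¹ * x 1 ^ b := by
    simp only [map_mul, map_pow, map_inv, hφ] at hf
    rw [mul_inv_eq_one] at hf
    rw [← hf]; group
  have h2 := hfix g
  rw [h1] at h2
  simp only [map_mul, map_pow, map_inv, hρ, inv_pow, inv_inv, Equiv.Perm.mul_apply] at h2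
  have hab : a = b := by
    have h3 : ((plPerm 1 ^ b)⁻¹ * plPerm 1 ^ a) = (plPerm 1 ^ a) * (plPerm 1 ^ b)⁻¹ :=
      ((Commute.refl (plPerm 1)).pow_pow b a).inv_left.eq
    rw [← Equiv.Perm.mul_apply, ← h3, Equiv.Perm.mul_apply, Equiv.Perm.inv_eq_iff_eq,
      plPerm_pow, plPerm_pow] at h2
    exact_mod_cast add_left_cancel h2
  subst hab
  rw [inv_mul_cancel, hc] at h1
  have h4 : φ g = 1 := by
    have : φ g = x 0 * ((x 0)⁻¹ * φ g * x 0) * (x 0)⁻¹ := by group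
    rw [this, h1]; group
  rw [h4]; group
end

section
/- F carries the universal example of a homomorphism that is idempotent up to conjugacy: if G is any group, ψ : G → G is a group endomorphism, and y₀ ∈ G satisfies ψ(ψ(g)) = y₀⁻¹ · ψ(g) · y₀ for all g ∈ G, then there exists a group homomorphism h : F → G with h(x_n) = ψ^[n](y₀) (the n-th iterate of ψ applied to y₀) for every n ≥ 0. -/
/-- `F` carries the universal example of a homomorphism that is idempotent up to conjugacy:
given any group `G`, an endomorphism `ψ : G →* G` and `y₀ ∈ G` with
`ψ(ψ(g)) = y₀⁻¹ · ψ(g) · y₀` for all `g`, there is a homomorphism `h : F →* G` with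
`h(xₙ) = ψ^[n](y₀)` for all `n`. -/
theorem thompsonF_universal_conjugacy_idempotent (G : Type*) [Group G]
    (ψ : G →* G) (y₀ : G) (hψ : ∀ g : G, ψ (ψ g) = y₀⁻¹ * ψ g * y₀) :
    ∃ h : ThompsonF →* G, ∀ n : ℕ, h (x n) = (⇑ψ)^[n] y₀ := by
  have key : ∀ i n : ℕ, i < n →
      ((⇑ψ)^[i] y₀)⁻¹ * (⇑ψ)^[n] y₀ * (⇑ψ)^[i] y₀ = (⇑ψ)^[n + 1] y₀ := by
    intro i
    induction i with
    | zero =>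
      intro n hn
      obtain ⟨m, rfl⟩ : ∃ m, n = m + 1 := ⟨n - 1, by omega⟩
      simp only [Function.iterate_succ_apply', Function.iterate_zero, id_eq]
      exact (hψ _).symm
    | succ i ih =>
      intro n hn
      obtain ⟨m, rfl⟩ : ∃ m, n = m + 1 := ⟨n - 1, by omega⟩
      have h := congrArg ψ (ih m (by omega))
      simpa only [map_mul, map_inv, Function.iterate_succ_apply'] using h
  have hr : ∀ r ∈ thompsonRels, FreeGroup.lift (fun n : ℕ => (⇑ψ)^[n] y₀) r = 1 := by
    rintro r ⟨i, n, hin, rfl⟩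
    simp only [map_mul, map_inv, FreeGroup.lift_apply_of]
    rw [key i n hin, mul_inv_cancel]
  exact ⟨PresentedGroup.toGroup hr, fun n => PresentedGroup.toGroup.of hr⟩
end

section
/- The abelianization of Thompson's group F is free abelian of rank 2: Abelianization F is isomorphic to ℤ × ℤ. -/
/-- Images of the generators. -/
def thGen (n : ℕ) : Multiplicative (ℤ × ℤ) :=
  if n = 0 then Multiplicative.ofAdd (1, 0) else Multiplicative.ofAdd (0, 1)

theorem thGen_rels : ∀ r ∈ thompsonRels, FreeGroup.lift thGen r = 1 := by
  rintro r ⟨i, n, h, rfl⟩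
  have hn : thGen (n + 1) = thGen n := by
    have : n ≠ 0 := by omega
    simp [thGen, this]
  simp only [map_mul, map_inv, FreeGroup.lift_apply_of, hn]
  rw [mul_comm (thGen i)⁻¹, inv_mul_cancel_right, mul_inv_cancel]

/-- The forward map. -/
def thFwd : Abelianization ThompsonF →* Multiplicative (ℤ × ℤ) :=
  Abelianization.lift (PresentedGroup.toGroup thGen_rels)

/-- Generators in the abelianization. -/
def thA (n : ℕ) : Abelianization ThompsonF :=
  Abelianization.of (PresentedGroup.of n : ThompsonF)

theorem thA_step (n : ℕ) (h : 0 < n) : thA (n + 1) = thA n := by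
  have h1 : ((PresentedGroup.of 0 : ThompsonF))⁻¹ * PresentedGroup.of n * PresentedGroup.of 0
      * (PresentedGroup.of (n + 1))⁻¹ = 1 :=
    PresentedGroup.one_of_mem (rels := thompsonRels) ⟨0, n, h, rfl⟩
  have h2 := congrArg (Abelianization.of (G := ThompsonF)) h1
  simp only [map_mul, map_inv, map_one] at h2
  change (thA 0)⁻¹ * thA n * thA 0 * (thA (n + 1))⁻¹ = 1 at h2
  rw [mul_comm (thA 0)⁻¹, inv_mul_cancel_right, mul_inv_eq_one] at h2
  exact h2.symm

theorem thA_eq (n : ℕ) : thA (n + 1) = thA 1 := by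
  induction n with
  | zero => rfl
  | succ k ih => rw [thA_step (k + 1) (by omega), ih]

/-- The backward map. -/
def thBwd : Multiplicative (ℤ × ℤ) →* Abelianization ThompsonF where
  toFun p := thA 0 ^ p.toAdd.1 * thA 1 ^ p.toAdd.2
  map_one' := by simp
  map_mul' p q := by
    simp only [toAdd_mul, Prod.fst_add, Prod.snd_add, zpow_add]
    exact mul_mul_mul_comm _ _ _ _

theorem thFwd_A (n : ℕ) : thFwd (thA n) = thGen n := by
  simp [thFwd, thA]

theorem thBwd_gen (n : ℕ) : thBwd (thGen n) = thA n := by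
  cases n with
  | zero => simp [thBwd, thGen]
  | succ k => rw [thA_eq]; simp [thBwd, thGen]

/-- The abelianization of Thompson's group `F` is free abelian of rank 2, i.e. isomorphic
to `ℤ × ℤ`. -/
theorem thompsonF_abelianization :
    Nonempty (Abelianization ThompsonF ≃* Multiplicative (ℤ × ℤ)) := by
  refine ⟨MonoidHom.toMulEquiv thFwd thBwd ?_ ?_⟩
  · apply Abelianization.hom_ext
    apply PresentedGroup.ext
    intro n
    change thBwd (thFwd (thA n)) = thA n
    rw [thFwd_A, thBwd_gen]
  · refine MonoidHom.ext fun p => ?_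
    change thFwd (thA 0 ^ p.toAdd.1 * thA 1 ^ p.toAdd.2) = p
    rw [map_mul, map_zpow, map_zpow, thFwd_A, thFwd_A]
    apply Multiplicative.toAdd.injective
    ext <;> simp [thGen]
end

section
/- The commutator subgroup F' of Thompson's group F is a simple group. -/
namespace TF

open scoped commutatorElement

/-- The piecewise linear homeomorphism of the line representing the inverse of the `i`-th generator. -/
def lam (i : ℕ) : ℚ ≃o ℚ where
  toFun t := if t ≤ i then t else if t ≤ i + 1 then 2 * t - i else t + 1
  invFun t := if t ≤ i then t else if t ≤ i + 2 then (t + i) / 2 else t - 1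
  left_inv := by
    intro t
    dsimp only
    split_ifs <;> linarith
  right_inv := by
    intro t
    dsimp only
    split_ifs <;> linarith
  map_rel_iff' := by
    intro a b
    simp only [Equiv.coe_fn_mk]
    split_ifs <;> constructor <;> intro h <;> linarith

lemma lam_symm_apply (i : ℕ) (t : ℚ) :
    (lam i).symm t = if t ≤ i then t else if t ≤ i + 2 then (t + i) / 2 else t - 1 := rfl

lemma lam_apply (i : ℕ) (t : ℚ) :
    lam i t = if t ≤ i then t else if t ≤ i + 1 then 2 * t - i else t + 1 := rfl

lemma lam_rel (i n : ℕ) (h : i < n) : lam i * lam n = lam (n + 1) * lam i := by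
  ext t
  have h' : (i : ℚ) + 1 ≤ n := by exact_mod_cast h
  simp only [RelIso.mul_apply, lam_apply]
  push_cast
  split_ifs <;> linarith

/-- The action on the line. -/
def rho : ThompsonF →* (ℚ ≃o ℚ) :=
  PresentedGroup.toGroup (f := fun i => (lam i)⁻¹) (by
    rintro r ⟨i, n, h, rfl⟩
    simp only [map_mul, map_inv, FreeGroup.lift_apply_of, inv_inv]
    have e : lam i * (lam n)⁻¹ * (lam i)⁻¹ = (lam i * (lam i * lam n)⁻¹) := by group
    rw [e, lam_rel i n h]
    group)

lemma rho_x (i : ℕ) : rho (x i) = (lam i)⁻¹ := PresentedGroup.toGroup.of _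

lemma rho_x_apply (i : ℕ) (t : ℚ) :
    rho (x i) t = if t ≤ i then t else if t ≤ i + 2 then (t + i) / 2 else t - 1 := by
  rw [rho_x]; rfl

lemma rho_x_inv_apply (i : ℕ) (t : ℚ) :
    rho (x i)⁻¹ t = if t ≤ i then t else if t ≤ i + 1 then 2 * t - i else t + 1 := by
  rw [map_inv, rho_x, inv_inv]; rfl

lemma rho_mul (g h : ThompsonF) (t : ℚ) : rho (g * h) t = rho g (rho h t) := by
  rw [map_mul]; rfl

lemma rho_one (t : ℚ) : rho 1 t = t := by
  rw [map_one]; rfl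

lemma rho_inv_rho (g : ThompsonF) (t : ℚ) : rho g⁻¹ (rho g t) = t := by
  rw [← rho_mul, inv_mul_cancel, rho_one]

lemma rho_rho_inv (g : ThompsonF) (t : ℚ) : rho g (rho g⁻¹ t) = t := by
  rw [← rho_mul, mul_inv_cancel, rho_one]

lemma rho_inv_eq (g : ThompsonF) {s t : ℚ} (h : rho g s = t) : rho g⁻¹ t = s := by
  rw [← h, rho_inv_rho]

lemma rel (i n : ℕ) (h : i < n) : x n * x i = x i * x (n + 1) := by
  have : (x i)⁻¹ * x n * x i * (x (n + 1))⁻¹ = 1 :=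
    PresentedGroup.one_of_mem (rels := thompsonRels) ⟨i, n, h, rfl⟩
  have h2 := mul_inv_eq_one.mp this
  rw [← h2]; group

lemma closure_x : Subgroup.closure (Set.range x) = ⊤ :=
  PresentedGroup.closure_range_of thompsonRels

/-- positive words -/
def W (l : List ℕ) : ThompsonF := (l.map x).prod

lemma W_cons (i : ℕ) (l : List ℕ) : W (i :: l) = x i * W l := by simp [W]
lemma W_nil : W [] = 1 := by simp [W]

lemma W_sort (l : List ℕ) (hl : l ≠ []) : ∃ i l', l'.length + 1 = l.length ∧
    W l = x i * W l' ∧ ∀ j ∈ l', i ≤ j := by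
  induction l with
  | nil => exact absurd rfl hl
  | cons j l0 ih =>
    rcases eq_or_ne l0 [] with rfl | h0
    · exact ⟨j, [], by simp, by rw [W_cons], by simp⟩
    · obtain ⟨i, l1, hlen, hW, hmin⟩ := ih h0
      by_cases hji : j ≤ i
      · refine ⟨j, i :: l1, by simp [hlen], by rw [W_cons, W_cons, hW], ?_⟩
        intro k hk
        rcases List.mem_cons.mp hk with rfl | hk
        · exact hji
        · exact hji.trans (hmin k hk)
      · push Not at hji
        refine ⟨i, (j + 1) :: l1, by simp [hlen], ?_, ?_⟩
        · rw [W_cons, W_cons, hW, ← mul_assoc, rel i j hji, mul_assoc]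
        · intro k hk
          rcases List.mem_cons.mp hk with rfl | hk
          · omega
          · exact hmin k hk

lemma x_le (i : ℕ) (t : ℚ) : rho (x i) t ≤ t := by
  rw [rho_x_apply]; split_ifs <;> linarith

lemma x_lt (i : ℕ) (t : ℚ) (h : (i : ℚ) < t) : rho (x i) t < t := by
  rw [rho_x_apply]; split_ifs <;> linarith

lemma x_fix (i : ℕ) (t : ℚ) (h : t ≤ i) : rho (x i) t = t := by
  rw [rho_x_apply, if_pos h]

lemma W_le (l : List ℕ) (t : ℚ) : rho (W l) t ≤ t := by
  induction l with
  | nil => rw [W_nil, rho_one]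
  | cons i l ih => rw [W_cons, rho_mul]; exact (x_le _ _).trans ih

lemma W_fix (i : ℕ) (l : List ℕ) (hl : ∀ j ∈ l, i ≤ j) (t : ℚ) (ht : t ≤ i) :
    rho (W l) t = t := by
  induction l with
  | nil => rw [W_nil, rho_one]
  | cons j l ih =>
    rw [W_cons, rho_mul, ih (fun k hk => hl k (List.mem_cons_of_mem _ hk))]
    apply x_fix
    have : (i : ℚ) ≤ j := by exact_mod_cast hl j List.mem_cons_self
    linarith

lemma xW_fix (i : ℕ) (l : List ℕ) (hl : ∀ j ∈ l, i ≤ j) (t : ℚ) (ht : t ≤ i) :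
    rho (x i * W l) t = t := by
  rw [rho_mul, W_fix i l hl t ht, x_fix i t ht]

lemma xW_lt (i : ℕ) (l : List ℕ) (hl : ∀ j ∈ l, i ≤ j) (t : ℚ) (ht : (i : ℚ) < t) :
    rho (x i * W l) t < t := by
  rw [rho_mul]
  refine lt_of_lt_of_le (x_lt i _ ?_) (W_le l t)
  rw [← W_fix i l hl i le_rfl]
  exact (rho (W l)).strictMono ht

lemma W_inj (n : ℕ) : ∀ l l' : List ℕ, l.length = n → rho (W l) = rho (W l') → W l = W l' := by
  induction n with
  | zero =>
    intro l l' hl h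
    have : l = [] := List.length_eq_zero_iff.mp hl
    subst this
    rcases eq_or_ne l' [] with rfl | h0
    · rfl
    · obtain ⟨i, l1, -, hW, hmin⟩ := W_sort l' h0
      have := xW_lt i l1 hmin (i + 1) (by linarith)
      rw [← hW, ← h, W_nil, rho_one] at this
      exact absurd this (lt_irrefl _)
  | succ n ih =>
    intro l l' hl h
    have hne : l ≠ [] := by rintro rfl; simp at hl
    obtain ⟨i, l1, hlen, hW, hmin⟩ := W_sort l hne
    rcases eq_or_ne l' [] with rfl | h0
    · have := xW_lt i l1 hmin (i + 1) (by linarith)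
      rw [← hW, h, W_nil, rho_one] at this
      exact absurd this (lt_irrefl _)
    · obtain ⟨i', l1', -, hW', hmin'⟩ := W_sort l' h0
      have hii : i = i' := by
        rcases lt_trichotomy i i' with hlt | heq | hlt
        · have h1 := xW_lt i l1 hmin i' (by exact_mod_cast hlt)
          have h2 := xW_fix i' l1' hmin' i' le_rfl
          rw [← hW, h, hW', h2] at h1
          exact absurd h1 (lt_irrefl _)
        · exact heq
        · have h1 := xW_lt i' l1' hmin' i (by exact_mod_cast hlt)
          have h2 := xW_fix i l1 hmin i le_rfl
          rw [← hW', ← h, hW, h2] at h1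
          exact absurd h1 (lt_irrefl _)
      subst hii
      rw [hW, hW', map_mul, map_mul] at h
      rw [hW, hW', ih l1 l1' (by omega) (mul_left_cancel h)]

lemma ore (l : List ℕ) : ∀ i : ℕ, ∃ l' m : List ℕ, (x i)⁻¹ * W l = W l' * (W m)⁻¹ := by
  induction l with
  | nil => intro i; exact ⟨[], [i], by simp [W_cons, W_nil]⟩
  | cons n l ih =>
    intro i
    rcases lt_trichotomy i n with h | rfl | h
    · obtain ⟨l', m, e⟩ := ih i
      refine ⟨(n + 1) :: l', m, ?_⟩
      rw [W_cons, W_cons, mul_assoc, ← e, inv_mul_eq_iff_eq_mul, ← mul_assoc, ← mul_assoc,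
        ← rel i n h]
      group
    · exact ⟨l, [], by simp [W_cons, W_nil]⟩
    · obtain ⟨l', m, e⟩ := ih (i + 1)
      refine ⟨n :: l', m, ?_⟩
      rw [W_cons, W_cons, mul_assoc, ← e, inv_mul_eq_iff_eq_mul, ← mul_assoc, ← mul_assoc,
        rel n i h]
      group

lemma frac (g : ThompsonF) : ∃ l m : List ℕ, g = W l * (W m)⁻¹ := by
  have hg : g ∈ Subgroup.closure (Set.range x) := by rw [closure_x]; trivial
  induction hg using Subgroup.closure_induction_left with
  | one => exact ⟨[], [], by simp [W_nil]⟩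
  | mul_left y hy g _ ih =>
    obtain ⟨i, rfl⟩ := hy
    obtain ⟨l, m, rfl⟩ := ih
    exact ⟨i :: l, m, by rw [W_cons, mul_assoc]⟩
  | inv_mul_cancel y hy g _ ih =>
    obtain ⟨i, rfl⟩ := hy
    obtain ⟨l, m, rfl⟩ := ih
    obtain ⟨l', m', e⟩ := ore l i
    refine ⟨l', m ++ m', ?_⟩
    rw [← mul_assoc, e]
    simp [W, mul_assoc]

lemma rho_inj {g h : ThompsonF} (H : ∀ t, rho g t = rho h t) : g = h := by
  have h1 : rho (h⁻¹ * g) = 1 := by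
    ext t
    rw [rho_mul, H, rho_inv_rho]; rfl
  obtain ⟨l, m, e⟩ := frac (h⁻¹ * g)
  rw [e, map_mul, map_inv, mul_inv_eq_one] at h1
  have := W_inj _ l m rfl h1
  rw [this, mul_inv_cancel, inv_mul_eq_one] at e
  exact e.symm

lemma comm_of_disjoint {f g : ThompsonF} (H : ∀ t, rho f t = t ∨ rho g t = t) :
    f * g = g * f := by
  apply rho_inj
  intro t
  rw [rho_mul, rho_mul]
  rcases H t with h | h
  · rcases H (rho g t) with h' | h'
    · rw [h', h]
    · have := (rho g).injective h'
      rw [this, h, this]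
  · rcases H (rho f t) with h' | h'
    · have := (rho f).injective h'
      rw [h, this, h]
    · rw [h, h']

/-- criterion to contain the commutator subgroup -/
lemma comm_le (S : Subgroup ThompsonF) [S.Normal] (h : ∀ j, 1 ≤ j → (x j)⁻¹ * x (j + 1) ∈ S) :
    commutator ThompsonF ≤ S := by
  let q := QuotientGroup.mk' S
  have hq : ∀ j, 1 ≤ j → q (x j) = q (x (j + 1)) := fun j hj =>
    QuotientGroup.eq.mpr (h j hj)
  have key : ∀ i n, i < n → q (x n) * q (x i) = q (x i) * q (x n) := by
    intro i n hin
    rw [← map_mul, rel i n hin, map_mul, ← hq n (by omega)]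
  have key2 : ∀ i n, q (x n) * q (x i) = q (x i) * q (x n) := by
    intro i n
    rcases lt_trichotomy i n with h | rfl | h
    · exact key i n h
    · rfl
    · exact (key n i h).symm
  have h1 : ∀ i (g : ThompsonF), q g * q (x i) = q (x i) * q g := by
    intro i g
    have hg : g ∈ Subgroup.closure (Set.range x) := by rw [closure_x]; trivial
    have hle : Subgroup.closure (Set.range x) ≤ (Subgroup.centralizer {q (x i)}).comap q := by
      rw [Subgroup.closure_le]
      rintro _ ⟨n, rfl⟩
      simp only [SetLike.mem_coe, Subgroup.mem_comap, Subgroup.mem_centralizer_singleton_iff]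
      exact key2 i n
    have := hle hg
    simp only [Subgroup.mem_comap, Subgroup.mem_centralizer_singleton_iff] at this
    exact this
  have h2 : ∀ g k : ThompsonF, q g * q k = q k * q g := by
    intro g k
    have hk : k ∈ Subgroup.closure (Set.range x) := by rw [closure_x]; trivial
    have hle : Subgroup.closure (Set.range x) ≤ (Subgroup.centralizer {q g}).comap q := by
      rw [Subgroup.closure_le]
      rintro _ ⟨n, rfl⟩
      simp only [SetLike.mem_coe, Subgroup.mem_comap, Subgroup.mem_centralizer_singleton_iff]
      exact (h1 n g).symm
    have := hle hk
    simp only [Subgroup.mem_comap, Subgroup.mem_centralizer_singleton_iff] at this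
    exact this.symm
  rw [commutator_def, Subgroup.commutator_le]
  intro g _ k _
  rw [← QuotientGroup.eq_one_iff]
  change q ⁅g, k⁆ = 1
  rw [map_commutatorElement, commutatorElement_eq_one_iff_mul_comm]
  exact h2 g k

abbrev F' : Subgroup ThompsonF := commutator ThompsonF

lemma comm_mem (g h : ThompsonF) : g * h * g⁻¹ * h⁻¹ ∈ F' :=
  Subgroup.commutator_mem_commutator (Subgroup.mem_top g) (Subgroup.mem_top h)

lemma y_mem (j : ℕ) (hj : 1 ≤ j) : (x j)⁻¹ * x (j + 1) ∈ F' := by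
  have h := comm_mem (x j)⁻¹ (x 0)⁻¹
  have e : (x j)⁻¹ * (x 0)⁻¹ * ((x j)⁻¹)⁻¹ * ((x 0)⁻¹)⁻¹ = (x j)⁻¹ * x (j + 1) := by
    have := rel 0 j (by omega)
    rw [inv_inv, inv_inv, mul_assoc, this]; group
  rwa [e] at h

lemma perfect : F' ≤ ⁅F', F'⁆ := by
  have hn : ((⁅F', F'⁆ : Subgroup ThompsonF)).Normal := inferInstance
  let q := QuotientGroup.mk' (⁅F', F'⁆ : Subgroup ThompsonF)
  have hr : ∀ i n, i < n → q (x n) * q (x i) = q (x i) * q (x (n + 1)) := fun i n h => by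
    rw [← map_mul, rel i n h, map_mul]
  have hc : q ((x 1)⁻¹ * x 2) * q ((x 2)⁻¹ * x 3) = q ((x 2)⁻¹ * x 3) * q ((x 1)⁻¹ * x 2) := by
    rw [← commutatorElement_eq_one_iff_mul_comm, ← map_commutatorElement]
    exact (QuotientGroup.eq_one_iff _).mpr
      (Subgroup.commutator_mem_commutator (y_mem 1 le_rfl) (y_mem 2 (by omega)))
  simp only [map_mul, map_inv] at hc
  have r12 := hr 1 2 (by omega)
  have r13 := hr 1 3 (by omega)
  have r23 := hr 2 3 (by omega)
  have h23 : q (x 2) = q (x 3) := by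
    norm_num at r12 r13 r23
    generalize q (x 1) = a at *
    generalize q (x 2) = b at *
    generalize q (x 3) = c at *
    generalize q (x 4) = d at *
    -- a⁻¹ c = b⁻¹ c a⁻¹ b
    have e1 : a⁻¹ * (c * b⁻¹) * a = b⁻¹ * c := by
      have : a⁻¹ * c = b⁻¹ * c * (a⁻¹ * b) := by rw [← hc]; group
      rw [← mul_assoc, this]; group
    have e2 : a⁻¹ * (c * b⁻¹) * a = d * c⁻¹ := by
      have h1 : b = a * c * a⁻¹ := by rw [← r12]; group
      have h2 : c = a * d * a⁻¹ := by rw [← r13]; group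
      have h3 : c * b⁻¹ = (a * d * a⁻¹) * (a * c * a⁻¹)⁻¹ := by rw [← h1, ← h2]
      rw [h3]; group
    have e3 : b⁻¹ * c = d * b⁻¹ := by
      rw [inv_mul_eq_iff_eq_mul, ← mul_assoc, ← r23]; group
    have := e2.symm.trans (e1.trans e3)
    exact (inv_injective (mul_left_cancel this)).symm
  have h12 : q (x 1) = q (x 2) := by
    have a1 := hr 0 1 (by omega)
    have a2 := hr 0 2 (by omega)
    norm_num at a1 a2
    rw [← h23, ← a1] at a2
    exact (mul_right_cancel a2).symm
  have hj : ∀ j, 1 ≤ j → q (x j) = q (x (j + 1)) := by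
    intro j hj
    induction j, hj using Nat.le_induction with
    | base => exact h12
    | succ j hj ih =>
      have a1 := hr 0 j (by omega)
      have a2 := hr 0 (j + 1) (by omega)
      rw [← ih, a1] at a2
      exact mul_left_cancel a2
  exact comm_le _ fun j h => QuotientGroup.eq.mp (hj j h)

lemma fix_nonpos (g : ThompsonF) : ∀ t : ℚ, t ≤ 0 → rho g t = t := by
  have hg : g ∈ Subgroup.closure (Set.range x) := by rw [closure_x]; trivial
  induction hg using Subgroup.closure_induction with
  | one => intro t _; exact rho_one t
  | mem y hy =>
    obtain ⟨i, rfl⟩ := hy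
    intro t ht
    exact x_fix i t (ht.trans (Nat.cast_nonneg i))
  | mul a b _ _ ha hb => intro t ht; rw [rho_mul, hb t ht, ha t ht]
  | inv a _ ha => intro t ht; exact rho_inv_eq a (ha t ht)

/-- compactly supported elements -/
def CS : Subgroup ThompsonF where
  carrier := {g | ∃ a b : ℚ, 0 < a ∧ a < b ∧ ∀ t, (t ≤ a ∨ b ≤ t) → rho g t = t}
  one_mem' := ⟨1, 2, by norm_num, by norm_num, fun t _ => rho_one t⟩
  mul_mem' := by
    rintro g h ⟨a, b, ha, hab, H⟩ ⟨a', b', ha', hab', H'⟩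
    refine ⟨min a a', max b b', lt_min ha ha', ?_, ?_⟩
    · exact lt_of_le_of_lt (min_le_left _ _) (lt_of_lt_of_le hab (le_max_left _ _))
    · intro t ht
      simp only [le_min_iff, max_le_iff] at ht
      rw [rho_mul, H' t (ht.imp And.right And.right), H t (ht.imp And.left And.left)]
  inv_mem' := by
    rintro g ⟨a, b, ha, hab, H⟩
    exact ⟨a, b, ha, hab, fun t ht => rho_inv_eq g (H t ht)⟩

instance : CS.Normal where
  conj_mem := by
    rintro g ⟨a, b, ha, hab, H⟩ k
    refine ⟨rho k a, rho k b, ?_, (rho k).strictMono hab, ?_⟩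
    · have := (rho k).strictMono ha
      rwa [fix_nonpos k 0 le_rfl] at this
    · intro t ht
      rw [rho_mul, rho_mul, H, rho_rho_inv]
      refine ht.imp (fun h => ?_) (fun h => ?_)
      · rw [← rho_inv_rho k a]; exact (rho k⁻¹).monotone h
      · rw [← rho_inv_rho k b]; exact (rho k⁻¹).monotone h

lemma F'_le_CS : F' ≤ CS := by
  apply comm_le
  intro j hj
  have hj' : (1 : ℚ) ≤ j := by exact_mod_cast hj
  refine ⟨j, j + 3, by linarith, by linarith, ?_⟩
  intro t ht
  rw [rho_mul, rho_x_inv_apply, rho_x_apply]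
  push_cast
  rcases ht with h | h <;> split_ifs <;> linarith

lemma halve1 (k : ℕ) : ∃ u : ThompsonF, ∀ t : ℚ, 0 ≤ t →
    (t ≤ 2 * k → rho u t = t / 2) ∧ (2 * k ≤ t → rho u t = t - k) := by
  induction k with
  | zero =>
    refine ⟨1, fun t ht => ⟨fun h => ?_, fun h => ?_⟩⟩ <;> rw [rho_one]
    · have : t = 0 := by push_cast at h; linarith
      rw [this]; simp
    · simp
  | succ k ih =>
    obtain ⟨u, hu⟩ := ih
    refine ⟨x k * u, fun t ht => ?_⟩
    rw [rho_mul, rho_x_apply]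
    push_cast
    rcases le_total t (2 * k) with h | h
    · rw [(hu t ht).1 h]
      constructor <;> intro h' <;> split_ifs <;> linarith
    · rw [(hu t ht).2 h]
      constructor <;> intro h' <;> split_ifs <;> linarith

lemma halve (M : ℚ) (m : ℕ) : ∃ u : ThompsonF, ∀ t : ℚ, 0 ≤ t → t ≤ M →
    rho u t = t / 2 ^ m := by
  induction m with
  | zero => exact ⟨1, fun t _ _ => by rw [rho_one]; simp⟩
  | succ m ih =>
    obtain ⟨u, hu⟩ := ih
    obtain ⟨k, hk⟩ := exists_nat_ge M
    obtain ⟨v, hv⟩ := halve1 k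
    refine ⟨v * u, fun t ht hM => ?_⟩
    have h1 : 0 ≤ t / 2 ^ m := by positivity
    have h2 : t / 2 ^ m ≤ t := div_le_self ht (one_le_pow₀ (by norm_num))
    rw [rho_mul, hu t ht hM, (hv _ h1).1 (by linarith), pow_succ, div_div]

lemma trans1 (M : ℚ) (m : ℕ) : ∃ g : ThompsonF, ∀ t : ℚ, 1 / 2 ^ m ≤ t → t ≤ M →
    rho g t = t + 1 / 2 ^ m := by
  obtain ⟨u, hu⟩ := halve (2 ^ m * M + 1) m
  have hp : (0 : ℚ) < 2 ^ m := by positivity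
  refine ⟨u * (x 0)⁻¹ * u⁻¹, fun t h1 h2 => ?_⟩
  have h3 : (1 : ℚ) ≤ 2 ^ m * t := by
    rw [div_le_iff₀ hp] at h1; linarith
  have h4 : (2 : ℚ) ^ m * t ≤ 2 ^ m * M := by gcongr
  have e1 : rho u⁻¹ t = 2 ^ m * t := by
    apply rho_inv_eq
    rw [hu _ (by linarith) (by linarith)]
    field_simp
  have e2 : rho (x 0)⁻¹ (2 ^ m * t) = 2 ^ m * t + 1 := by
    rw [rho_x_inv_apply]
    push_cast
    split_ifs <;> linarith
  rw [rho_mul, rho_mul, e1, e2, hu _ (by linarith) (by linarith)]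
  field_simp

lemma transj (m j : ℕ) : ∀ M : ℚ, ∃ g : ThompsonF, ∀ t : ℚ, 1 / 2 ^ m ≤ t → t ≤ M →
    rho g t = t + j * (1 / 2 ^ m) := by
  have hp : (0 : ℚ) < 1 / 2 ^ m := by positivity
  induction j with
  | zero => intro M; exact ⟨1, fun t _ _ => by rw [rho_one]; simp⟩
  | succ j ih =>
    intro M
    obtain ⟨g, hg⟩ := ih (M + 1 / 2 ^ m)
    obtain ⟨k, hk⟩ := trans1 M m
    refine ⟨g * k, fun t h1 h2 => ?_⟩
    rw [rho_mul, hk t h1 h2, hg _ (by linarith) (by linarith)]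
    push_cast; ring

lemma small (e : ℚ) (he : 0 < e) : ∃ m : ℕ, (1 : ℚ) / 2 ^ m < e := by
  obtain ⟨m, hm⟩ := exists_pow_lt_of_lt_one he (by norm_num : (1 / 2 : ℚ) < 1)
  exact ⟨m, by rwa [one_div_pow] at hm⟩

lemma squeeze (a b c d : ℚ) (ha : 0 < a) (hab : a < b) (hc : 0 ≤ c) (hcd : c < d) :
    ∃ h : ThompsonF, c < rho h a ∧ rho h b < d := by
  obtain ⟨m, hm⟩ := small ((d - c) / 2 / b) (by apply div_pos <;> linarith)
  obtain ⟨u, hu⟩ := halve b m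
  have hua := hu a ha.le hab.le
  have hub := hu b (by linarith) le_rfl
  have hb' : b / 2 ^ m < (d - c) / 2 := by
    rw [lt_div_iff₀ (by linarith)] at hm
    linarith [show 1 / 2 ^ m * b = b / 2 ^ m by ring]
  have ha' : 0 < a / 2 ^ m := by positivity
  have hab' : a / 2 ^ m < b / 2 ^ m := by gcongr
  obtain ⟨k, hk⟩ := small (min (a / 2 ^ m) ((d - c) / 2)) (lt_min ha' (by linarith))
  obtain ⟨hk1, hk2⟩ := lt_min_iff.mp hk
  have hs : (0 : ℚ) < 1 / 2 ^ k := by positivity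
  let j : ℕ := ⌊c / (1 / 2 ^ k)⌋₊ + 1
  have hj1 : c < j * (1 / 2 ^ k) := by
    rw [← div_lt_iff₀ hs]
    have : (j : ℚ) = (⌊c / (1 / 2 ^ k)⌋₊ : ℕ) + 1 := by simp [j]
    rw [this]
    exact Nat.lt_floor_add_one (c / (1 / 2 ^ k))
  have hj2 : (j : ℚ) * (1 / 2 ^ k) ≤ c + 1 / 2 ^ k := by
    have h1 : ((⌊c / (1 / 2 ^ k)⌋₊ : ℕ) : ℚ) ≤ c / (1 / 2 ^ k) :=
      Nat.floor_le (div_nonneg hc hs.le)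
    rw [le_div_iff₀ hs] at h1
    have : (j : ℚ) = (⌊c / (1 / 2 ^ k)⌋₊ : ℕ) + 1 := by simp [j]
    rw [this]
    linarith
  obtain ⟨g, hg⟩ := transj k j (b / 2 ^ m)
  refine ⟨g * u, ?_, ?_⟩
  · rw [rho_mul, hua, hg _ hk1.le hab'.le]; linarith
  · rw [rho_mul, hub, hg _ (by linarith) le_rfl]; linarith

lemma adjust (h : ThompsonF) (a b : ℚ) (ha : 0 < a) :
    ∃ g ∈ F', ∀ t, a ≤ t → t ≤ b → rho g t = rho h t := by
  let P : Subgroup ThompsonF :=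
    { carrier := {g | ∀ t, a ≤ t → t ≤ b → rho g t = t}
      one_mem' := fun t _ _ => rho_one t
      mul_mem' := by
        intro g h hg hh t h1 h2
        rw [rho_mul, hh t h1 h2, hg t h1 h2]
      inv_mem' := by
        intro g hg t h1 h2
        exact rho_inv_eq g (hg t h1 h2) }
  have hx : ∀ j, 1 ≤ j → ∀ n, j ≤ n → x n ∈ P ⊔ F' → x j ∈ P ⊔ F' := by
    intro j hj n hn
    induction n, hn using Nat.le_induction with
    | base => exact id
    | succ n hn ih =>
      intro hmem
      apply ih
      have := (P ⊔ F').mul_mem hmem (inv_mem (le_sup_right (a := P) (y_mem n (by omega))))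
      have e : x (n + 1) * ((x n)⁻¹ * x (n + 1))⁻¹ = x n := by group
      rwa [e] at this
  have hj : ∀ j, 1 ≤ j → x j ∈ P ⊔ F' := by
    intro j hj
    obtain ⟨n, hn⟩ := exists_nat_ge b
    refine hx j hj (max j n) (le_max_left _ _) (le_sup_left (a := P) ?_)
    intro t _ h2
    apply x_fix
    have : (n : ℚ) ≤ (max j n : ℕ) := by exact_mod_cast le_max_right _ _
    linarith
  have h0 : x 0 ∈ P ⊔ F' := by
    obtain ⟨m, hm⟩ := small (a / 3) (by linarith)
    obtain ⟨u, hu⟩ := halve 3 m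
    have hu3 : rho u 3 < a := by
      rw [hu 3 (by norm_num) le_rfl]
      linarith [show (3 : ℚ) / 2 ^ m = 3 * (1 / 2 ^ m) by ring]
    have hw : u * (x 0 * (x 1)⁻¹) * u⁻¹ ∈ P := by
      intro t h1 _
      have h3 : 3 ≤ rho u⁻¹ t := by
        rw [← rho_inv_rho u 3]
        exact (rho u⁻¹).monotone (by linarith)
      have : rho (x 0 * (x 1)⁻¹) (rho u⁻¹ t) = rho u⁻¹ t := by
        rw [rho_mul, rho_x_inv_apply, rho_x_apply]
        push_cast
        split_ifs <;> linarith
      rw [rho_mul, rho_mul, this, rho_rho_inv]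
    have hc : (x 0 * (x 1)⁻¹) * u * (x 0 * (x 1)⁻¹)⁻¹ * u⁻¹ ∈ F' := comm_mem _ _
    have h1 := (P ⊔ F').mul_mem ((P ⊔ F').mul_mem (le_sup_right (a := P) hc)
      (le_sup_left (a := P) hw)) (hj 1 le_rfl)
    have e : (x 0 * (x 1)⁻¹) * u * (x 0 * (x 1)⁻¹)⁻¹ * u⁻¹ * (u * (x 0 * (x 1)⁻¹) * u⁻¹) * x 1
      = x 0 := by group
    rwa [e] at h1
  have htop : (⊤ : Subgroup ThompsonF) ≤ P ⊔ F' := by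
    rw [← closure_x, Subgroup.closure_le]
    rintro _ ⟨i, rfl⟩
    rcases Nat.eq_zero_or_pos i with rfl | hi
    · exact h0
    · exact hj i hi
  have hmem : h⁻¹ ∈ P ⊔ F' := htop trivial
  obtain ⟨p, hp, f, hf, e⟩ := Subgroup.mem_sup_of_normal_right.mp hmem
  refine ⟨f⁻¹, inv_mem hf, fun t h1 h2 => ?_⟩
  have : f⁻¹ = h * p := by
    rw [inv_eq_iff_eq_inv, mul_inv_rev, ← e]; group
  rw [this, rho_mul, hp t h1 h2]

lemma main (N : Subgroup ThompsonF) (hN : N ≤ F') (hnorm : ∀ n ∈ N, ∀ g ∈ F', g * n * g⁻¹ ∈ N)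
    (hne : N ≠ ⊥) : F' ≤ N := by
  obtain ⟨⟨n0, hn0⟩, hn1'⟩ := Subgroup.ne_bot_iff_exists_ne_one.mp hne
  have hn1 : n0 ≠ 1 := fun h => hn1' (Subtype.ext h)
  obtain ⟨n, hn, t, ht⟩ : ∃ n ∈ N, ∃ t, t < rho n t := by
    by_contra! hcon
    apply hn1
    apply rho_inj
    intro t
    rw [rho_one]
    refine le_antisymm (hcon _ hn0 t) ?_
    have := hcon _ (inv_mem hn0) (rho n0 t)
    rwa [rho_inv_rho] at this
  have ht0 : 0 ≤ t := by
    by_contra! h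
    rw [fix_nonpos n t h.le] at ht
    exact lt_irrefl _ ht
  -- elements supported in the interval
  have key : ∀ a ∈ F', ∀ b ∈ F', (∀ s, (s ≤ t ∨ rho n t ≤ s) → rho a s = s) →
      (∀ s, (s ≤ t ∨ rho n t ≤ s) → rho b s = s) → a⁻¹ * b * a * b⁻¹ ∈ N := by
    intro a ha b hb sa sb
    have hcomm : (n * a * n⁻¹) * (a⁻¹ * b * a) = (a⁻¹ * b * a) * (n * a * n⁻¹) := by
      apply comm_of_disjoint
      intro s
      rcases le_or_gt (rho n t) s with h | h
      · right
        rw [rho_mul, rho_mul, sa s (Or.inr h), sb s (Or.inr h)]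
        exact rho_inv_eq a (sa s (Or.inr h))
      · left
        have : rho n⁻¹ s ≤ t := by
          rw [← rho_inv_rho n t]; exact (rho n⁻¹).monotone h.le
        rw [rho_mul, rho_mul, sa _ (Or.inl this), rho_rho_inv]
    have h1 : n * a * n⁻¹ * a⁻¹ ∈ N := by
      have := N.mul_mem hn (hnorm _ (inv_mem hn) a ha)
      simpa only [mul_assoc] using this
    have h2 := N.mul_mem h1 (hnorm _ (inv_mem h1) b hb)
    have e : n * a * n⁻¹ * a⁻¹ * (b * (n * a * n⁻¹ * a⁻¹)⁻¹ * b⁻¹) = a⁻¹ * b * a * b⁻¹ := by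
      have : n * a * n⁻¹ * a⁻¹ * (b * (n * a * n⁻¹ * a⁻¹)⁻¹ * b⁻¹)
        = (n * a * n⁻¹) * (a⁻¹ * b * a) * (n * a * n⁻¹)⁻¹ * b⁻¹ := by group
      rw [this, hcomm]; group
    rwa [e] at h2
  refine perfect.trans ?_
  rw [Subgroup.commutator_le]
  intro a ha b hb
  obtain ⟨p, q, hp, hpq, H⟩ := F'_le_CS ha
  obtain ⟨p', q', hp', hpq', H'⟩ := F'_le_CS hb
  have hlt : min p p' < max q q' :=
    lt_of_le_of_lt (min_le_left _ _) (lt_of_lt_of_le hpq (le_max_left _ _))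
  obtain ⟨h, hh1, hh2⟩ := squeeze (min p p') (max q q') t (rho n t) (lt_min hp hp') hlt ht0 ht
  obtain ⟨g, hg, hgh⟩ := adjust h (min p p') (max q q') (lt_min hp hp')
  rw [← hgh _ le_rfl hlt.le] at hh1
  rw [← hgh _ hlt.le le_rfl] at hh2
  have supp : ∀ f : ThompsonF, (∀ s, (s ≤ min p p' ∨ max q q' ≤ s) → rho f s = s) →
      ∀ s, (s ≤ t ∨ rho n t ≤ s) → rho (g * f * g⁻¹) s = s := by
    intro f hf s hs
    rw [rho_mul, rho_mul, hf, rho_rho_inv]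
    refine hs.imp (fun h => ?_) (fun h => ?_)
    · rw [← rho_inv_rho g (min p p')]; exact (rho g⁻¹).monotone (by linarith)
    · rw [← rho_inv_rho g (max q q')]; exact (rho g⁻¹).monotone (by linarith)
  have cj : ∀ f ∈ F', g * f * g⁻¹ ∈ F' := fun f hf => Subgroup.Normal.conj_mem inferInstance f hf g
  have ha' := supp a⁻¹ fun s hs => rho_inv_eq a (H s (by
    simp only [le_min_iff, max_le_iff] at hs; exact hs.imp And.left And.left))
  have hb' := supp b fun s hs => H' s (by
    simp only [le_min_iff, max_le_iff] at hs; exact hs.imp And.right And.right)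
  have h3 := hnorm _ (key _ (cj _ (inv_mem ha)) _ (cj _ hb) ha' hb') g⁻¹ (inv_mem hg)
  have e : g⁻¹ * ((g * a⁻¹ * g⁻¹)⁻¹ * (g * b * g⁻¹) * (g * a⁻¹ * g⁻¹) * (g * b * g⁻¹)⁻¹) * g⁻¹⁻¹
    = ⁅a, b⁆ := by
    rw [commutatorElement_def]; group
  rwa [e] at h3

end TF

/-- The commutator subgroup of Thompson's group `F` is a simple group. -/
theorem thompsonF_commutator_simple :
    IsSimpleGroup (commutator ThompsonF) := by
  have hnt : Nontrivial (commutator ThompsonF) := by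
    refine ⟨⟨⟨_, TF.y_mem 1 le_rfl⟩, 1, fun h => ?_⟩⟩
    have h1 : (x 1)⁻¹ * x 2 = 1 := congrArg Subtype.val h
    have h2 : x 1 = x 2 := inv_mul_eq_one.mp h1
    have h3 : TF.rho (x 1) 2 = TF.rho (x 2) 2 := by rw [h2]
    rw [TF.rho_x_apply, TF.rho_x_apply] at h3
    norm_num at h3
  refine { toNontrivial := hnt, eq_bot_or_eq_top_of_normal := fun H hH => ?_ }
  by_cases hb : H = ⊥
  · exact Or.inl hb
  right
  have hle := TF.main (H.map (commutator ThompsonF).subtype) (Subgroup.map_subtype_le H) (by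
    rintro _ ⟨n, hn, rfl⟩ g hg
    exact ⟨⟨g, hg⟩ * n * ⟨g, hg⟩⁻¹, hH.conj_mem n hn ⟨g, hg⟩, rfl⟩) (by
    intro h
    exact hb ((Subgroup.map_eq_bot_iff_of_injective H (Subgroup.subtype_injective _)).mp h))
  rw [eq_top_iff]
  rintro ⟨g, hg⟩ -
  obtain ⟨k, hk, e⟩ := hle hg
  have : k = ⟨g, hg⟩ := Subtype.ext e
  rwa [← this]
end

section
/- The commutator subgroup F' of Thompson's group F is not finitely generated. -/
/-- Piecewise linear homeomorphism of the line: identity below `n`, slope two on `[n, n+1]`,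
translation by one afterwards. -/
noncomputable def plG (n : ℕ) : Equiv.Perm ℝ where
  toFun t := if t ≤ n then t else if t ≤ n + 1 then 2 * t - n else t + 1
  invFun s := if s ≤ n then s else if s ≤ n + 2 then (s + n) / 2 else s - 1
  left_inv t := by
    dsimp only
    split_ifs <;> linarith
  right_inv t := by
    dsimp only
    split_ifs <;> linarith

theorem plG_apply (n : ℕ) (t : ℝ) :
    plG n t = if t ≤ n then t else if t ≤ n + 1 then 2 * t - n else t + 1 := rfl

theorem plG_rel {i n : ℕ} (h : i < n) : plG (n + 1) * plG i = plG i * plG n := by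
  have h' : (i : ℝ) + 1 ≤ n := by exact_mod_cast h
  ext t
  simp only [Equiv.Perm.mul_apply, plG_apply]
  push_cast
  split_ifs <;> linarith

noncomputable def plRho : ThompsonF →* Equiv.Perm ℝ :=
  PresentedGroup.toGroup (f := fun n => (plG n)⁻¹) (by
    rintro r ⟨i, n, h, rfl⟩
    have := plG_rel h
    simp only [map_mul, map_inv, FreeGroup.lift_apply_of, inv_inv]
    rw [mul_inv_eq_iff_eq_mul.mpr, inv_mul_cancel]
    rw [mul_inv_eq_iff_eq_mul, mul_assoc, ← this, inv_mul_cancel_left])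

theorem plRho_x (n : ℕ) : plRho (x n) = (plG n)⁻¹ := by
  simp [plRho, x]

/-- Permutations that are translations near infinity. -/
def EvT (f : Equiv.Perm ℝ) (c : ℝ) : Prop := ∃ N : ℝ, ∀ t, N ≤ t → f t = t + c

theorem EvT.mul {f g : Equiv.Perm ℝ} {c d : ℝ} (hf : EvT f c) (hg : EvT g d) :
    EvT (f * g) (c + d) := by
  obtain ⟨N, hN⟩ := hf
  obtain ⟨M, hM⟩ := hg
  refine ⟨max M (N - d), fun t ht => ?_⟩
  have h1 := le_trans (le_max_left _ _) ht
  have h2 := le_trans (le_max_right _ _) ht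
  rw [Equiv.Perm.mul_apply, hM t h1, hN _ (by linarith)]
  ring

theorem EvT.inv {f : Equiv.Perm ℝ} {c : ℝ} (hf : EvT f c) : EvT f⁻¹ (-c) := by
  obtain ⟨N, hN⟩ := hf
  refine ⟨N + c, fun t ht => ?_⟩
  rw [Equiv.Perm.inv_eq_iff_eq, hN _ (by linarith)]
  ring

theorem evT_all (w : ThompsonF) : ∃ c, EvT (plRho w) c := by
  have hG : ∀ n, EvT (plG n) 1 := fun n => ⟨n + 1, fun t ht => by
    rw [plG_apply]; split_ifs <;> linarith⟩
  let K : Subgroup ThompsonF :=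
    { carrier := {w | ∃ c, EvT (plRho w) c}
      one_mem' := ⟨0, 0, fun t _ => by simp⟩
      mul_mem' := by
        rintro a b ⟨c, hc⟩ ⟨d, hd⟩
        exact ⟨c + d, by rw [map_mul]; exact hc.mul hd⟩
      inv_mem' := by
        rintro a ⟨c, hc⟩
        exact ⟨-c, by rw [map_inv]; exact hc.inv⟩ }
  have hK : K = ⊤ := by
    rw [eq_top_iff, ← PresentedGroup.closure_range_of, Subgroup.closure_le]
    rintro _ ⟨n, rfl⟩
    exact ⟨-1, by
      have := (hG n).inv
      rw [← plRho_x] at this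
      exact this⟩
  have : w ∈ K := hK ▸ Subgroup.mem_top w
  exact this

theorem evT_comm {w : ThompsonF} (hw : w ∈ commutator ThompsonF) : EvT (plRho w) 0 := by
  let K : Subgroup ThompsonF :=
    { carrier := {w | EvT (plRho w) 0}
      one_mem' := ⟨0, fun t _ => by simp⟩
      mul_mem' := by
        intro a b hc hd
        have := EvT.mul hc hd
        rw [add_zero, ← map_mul] at this
        exact this
      inv_mem' := by
        intro a hc
        have := EvT.inv hc
        rw [neg_zero, ← map_inv] at this
        exact this }
  have hK : commutator ThompsonF ≤ K := by
    rw [commutator_def, Subgroup.commutator_le]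
    intro a _ b _
    obtain ⟨c, hc⟩ := evT_all a
    obtain ⟨d, hd⟩ := evT_all b
    have := ((hc.mul hd).mul hc.inv).mul hd.inv
    have h0 : c + d + -c + -d = 0 := by ring
    rw [h0] at this
    change EvT _ _
    rw [commutatorElement_def]
    simpa only [map_mul, map_inv] using this
  exact hK hw

open scoped commutatorElement in
theorem x_mem_comm (n : ℕ) (hn : 0 < n) : (x n)⁻¹ * x (n + 1) ∈ commutator ThompsonF := by
  have h : (x 0)⁻¹ * x n * x 0 * (x (n + 1))⁻¹ = 1 :=
    PresentedGroup.one_of_mem (rels := thompsonRels) ⟨0, n, hn, rfl⟩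
  have h2 : x (n + 1) = (x 0)⁻¹ * x n * x 0 := (mul_inv_eq_one.mp h).symm
  have h3 : (x n)⁻¹ * x (n + 1) = ⁅(x n)⁻¹, (x 0)⁻¹⁆ := by
    rw [h2, commutatorElement_def]; group
  rw [h3, commutator_def]
  exact Subgroup.commutator_mem_commutator (Subgroup.mem_top _) (Subgroup.mem_top _)

/-- The commutator subgroup of Thompson's group `F` is not finitely generated. -/
theorem thompsonF_commutator_not_fg :
    ¬ Subgroup.FG (commutator ThompsonF) := by
  rintro ⟨S, hS⟩
  have h1 : ∀ w ∈ S, ∃ N : ℝ, ∀ t, N ≤ t → plRho w t = t := by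
    intro w hw
    obtain ⟨N, hN⟩ := evT_comm (w := w) (hS ▸ Subgroup.subset_closure hw)
    exact ⟨N, fun t ht => by simpa using hN t ht⟩
  choose! N hN using h1
  obtain ⟨M, hM⟩ := (S.image N).bddAbove
  have h2 : ∀ w ∈ commutator ThompsonF, ∀ t, M ≤ t → plRho w t = t := by
    intro w hw
    rw [← hS] at hw
    induction hw using Subgroup.closure_induction with
    | mem w hw =>
      intro t ht
      exact hN w hw t (le_trans (hM (by simpa using ⟨w, hw, rfl⟩)) ht)
    | one => simp
    | mul a b _ _ ha hb =>
      intro t ht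
      rw [map_mul, Equiv.Perm.mul_apply, hb t ht, ha t ht]
    | inv a _ ha =>
      intro t ht
      rw [map_inv, Equiv.Perm.inv_eq_iff_eq, ha t ht]
  obtain ⟨n, hn⟩ := exists_nat_ge M
  have h3 := h2 _ (x_mem_comm (n + 1) (by omega)) ((n : ℝ) + 2) (by linarith)
  rw [map_mul, map_inv, plRho_x, plRho_x, inv_inv, Equiv.Perm.mul_apply] at h3
  have h4 : (plG (n + 1 + 1))⁻¹ ((n : ℝ) + 2) = n + 2 := by
    rw [Equiv.Perm.inv_eq_iff_eq, plG_apply]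
    push_cast
    split_ifs <;> linarith
  rw [h4, plG_apply] at h3
  push_cast at h3
  split_ifs at h3 <;> linarith
end

section
/- For every integer n ≥ 1, the integral group cohomology H^n(F; ℤ) of Thompson's group F (with trivial ℤ coefficients) is free abelian of rank 2, i.e., isomorphic to ℤ × ℤ. -/
namespace ThF

/-- The positive monoid generated by a family. -/
def pos {G : Type} [Group G] (x : ℕ → G) : Submonoid G := Submonoid.closure (Set.range x)

section Pos
variable {G : Type} [Group G] {x : ℕ → G}

lemma x_mem (i : ℕ) : x i ∈ pos x := Submonoid.subset_closure ⟨i, rfl⟩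

lemma pos_ind {P : G → Prop} (h1 : P 1) (hm : ∀ i u, u ∈ pos x → P u → P (x i * u)) :
    ∀ u ∈ pos x, P u := by
  intro u hu
  refine Submonoid.closure_induction_left (s := Set.range x) (motive := fun u _ => P u) h1 ?_ hu
  rintro _ ⟨i, rfl⟩ y hy h
  exact hm i y hy h

lemma pos_cases (m : G) (hm : m ∈ pos x) : m = 1 ∨ ∃ i, (x i)⁻¹ * m ∈ pos x := by
  revert m
  apply pos_ind
  · left; rfl
  · intro i u hu _
    right
    exact ⟨i, by simpa using hu⟩

variable (hx : ∀ i n, i < n → x n * x i = x i * x (n + 1))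
include hx

lemma hx' (i n : ℕ) (h : i < n) : (x i)⁻¹ * x n = x (n + 1) * (x i)⁻¹ := by
  rw [inv_mul_eq_iff_eq_mul, ← mul_assoc, ← hx i n h]; simp

lemma hx'' (i n : ℕ) (h : i < n) : (x n)⁻¹ * x i = x i * (x (n + 1))⁻¹ := by
  rw [inv_mul_eq_iff_eq_mul, ← mul_assoc, hx i n h]; simp

lemma ore1 : ∀ u ∈ pos x, ∀ i, ∃ m ∈ pos x, (x i)⁻¹ * u * m ∈ pos x := by
  apply pos_ind
  · intro i
    exact ⟨x i, x_mem i, by simp⟩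
  · intro a u hu ih i
    rcases lt_trichotomy i a with h | h | h
    · obtain ⟨m, hm, hm'⟩ := ih i
      refine ⟨m, hm, ?_⟩
      have : (x i)⁻¹ * (x a * u) * m = x (a + 1) * ((x i)⁻¹ * u * m) := by
        rw [← mul_assoc, hx' hx i a h]; group
      rw [this]; exact mul_mem (x_mem _) hm'
    · subst h
      exact ⟨1, one_mem _, by simpa using hu⟩
    · obtain ⟨m, hm, hm'⟩ := ih (i + 1)
      refine ⟨m, hm, ?_⟩
      have : (x i)⁻¹ * (x a * u) * m = x a * ((x (i + 1))⁻¹ * u * m) := by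
        rw [← mul_assoc, hx'' hx a i h]; group
      rw [this]; exact mul_mem (x_mem _) hm'

lemma ore (hgen : Subgroup.closure (Set.range x) = ⊤) (u : G) : ∃ m ∈ pos x, u * m ∈ pos x := by
  have hu : u ∈ Subgroup.closure (Set.range x) := by rw [hgen]; trivial
  refine Subgroup.closure_induction_left (s := Set.range x)
    (p := fun u _ => ∃ m ∈ pos x, u * m ∈ pos x) ?_ ?_ ?_ hu
  · exact ⟨1, one_mem _, by simp⟩
  · rintro _ ⟨i, rfl⟩ y hy ⟨m, hm, h⟩
    exact ⟨m, hm, by rw [mul_assoc]; exact mul_mem (x_mem _) h⟩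
  · rintro _ ⟨i, rfl⟩ y hy ⟨m, hm, h⟩
    obtain ⟨m', hm', h'⟩ := ore1 hx _ h i
    exact ⟨m * m', mul_mem hm hm', by simpa [mul_assoc] using h'⟩

end Pos

/-- The generators of `F`. -/
def gx (i : ℕ) : ThompsonF := PresentedGroup.of i

lemma gx_rel (i n : ℕ) (h : i < n) : gx n * gx i = gx i * gx (n + 1) := by
  have : (PresentedGroup.mk thompsonRels)
    ((FreeGroup.of i)⁻¹ * FreeGroup.of n * FreeGroup.of i * (FreeGroup.of (n + 1))⁻¹) = 1 :=
    PresentedGroup.one_of_mem ⟨i, n, h, rfl⟩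
  simp only [map_mul, map_inv] at this
  rw [mul_inv_eq_one, mul_assoc, inv_mul_eq_iff_eq_mul] at this
  exact this

lemma gx_gen : Subgroup.closure (Set.range gx) = ⊤ := PresentedGroup.closure_range_of _

/-- Word length homomorphism. -/
def glen : ThompsonF →* Multiplicative ℤ :=
  PresentedGroup.toGroup (f := fun _ => Multiplicative.ofAdd 1) (by
    rintro _ ⟨i, n, h, rfl⟩
    simp)

lemma glen_gx (i : ℕ) : glen (gx i) = Multiplicative.ofAdd 1 := PresentedGroup.toGroup.of _

/-- The piecewise linear map expanding the interval `[i, i+1]`. -/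
def fE (i : ℕ) : Equiv.Perm ℚ where
  toFun t := if t ≤ i then t else if t ≤ i + 1 then 2 * t - i else t + 1
  invFun t := if t ≤ i then t else if t ≤ i + 2 then (t + i) / 2 else t - 1
  left_inv t := by
    dsimp only
    split_ifs <;> linarith
  right_inv t := by
    dsimp only
    split_ifs <;> linarith

lemma fE_comm (i n : ℕ) (h : i < n) : fE i * fE n = fE (n + 1) * fE i := by
  have h' : (i : ℚ) + 1 ≤ n := by exact_mod_cast h
  ext t
  simp only [Equiv.Perm.mul_apply, fE, Equiv.coe_fn_mk, Nat.cast_add, Nat.cast_one]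
  split_ifs <;> linarith

/-- The action on `ℚ`. -/
def gact : ThompsonF →* Equiv.Perm ℚ :=
  PresentedGroup.toGroup (f := fun i => (fE i)⁻¹) (by
    rintro _ ⟨i, n, h, rfl⟩
    simp only [map_mul, map_inv, FreeGroup.lift_apply_of, inv_inv]
    rw [← inv_inj]
    simp only [mul_inv_rev, inv_inv, inv_one]
    rw [← mul_assoc, ← mul_assoc, mul_assoc (fE (n + 1))⁻¹, fE_comm i n h]; group)

lemma gact_gx (i : ℕ) : gact (gx i) = (fE i)⁻¹ := PresentedGroup.toGroup.of _

lemma gact_inv_mul (a : ℕ) (u : ThompsonF) (t : ℚ) :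
    (gact (gx a * u))⁻¹ t = (gact u)⁻¹ (fE a t) := by
  simp [gact_gx]

lemma fE_le (a k : ℕ) (h : k ≤ a) : fE a (k : ℚ) = (k : ℕ) := by
  have : (k : ℚ) ≤ a := by exact_mod_cast h
  simp [fE, this]

lemma fE_gt (a k : ℕ) (h : a < k) : fE a (k : ℚ) = ((k + 1 : ℕ) : ℚ) := by
  have : (a : ℚ) + 1 ≤ k := by exact_mod_cast h
  simp only [fE, Equiv.coe_fn_mk]
  push_cast
  split_ifs <;> linarith

lemma gact_mono : ∀ u ∈ pos gx, ∀ k : ℕ,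
    (gact u)⁻¹ ((k : ℕ) : ℚ) + 1 ≤ (gact u)⁻¹ ((k + 1 : ℕ) : ℚ) := by
  apply pos_ind
  · intro k; simp
  · intro a u hu ih k
    rw [gact_inv_mul, gact_inv_mul]
    rcases lt_trichotomy k a with h | h | h
    · rw [fE_le _ _ h.le, fE_le _ _ h]; exact ih k
    · rw [fE_le _ _ h.le, fE_gt _ _ (by omega)]
      have := ih k
      have := ih (k + 1)
      linarith
    · rw [fE_gt _ _ h, fE_gt _ _ (by omega)]; exact ih (k + 1)

lemma div_of : ∀ m ∈ pos gx, ∀ i : ℕ,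
    (gact m)⁻¹ ((i : ℕ) : ℚ) + 1 < (gact m)⁻¹ ((i + 1 : ℕ) : ℚ) → (gx i)⁻¹ * m ∈ pos gx := by
  apply pos_ind
  · intro i h; simp at h
  · intro a u hu ih i h
    rw [gact_inv_mul, gact_inv_mul] at h
    rcases lt_trichotomy i a with h' | h' | h'
    · rw [fE_le _ _ h'.le, fE_le _ _ h'] at h
      rw [← mul_assoc, hx' gx_rel i a h', mul_assoc]
      exact mul_mem (x_mem _) (ih i h)
    · subst h'; simpa using hu
    · rw [fE_gt _ _ h', fE_gt _ _ (by omega)] at h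
      rw [← mul_assoc, hx'' gx_rel a i h', mul_assoc]
      exact mul_mem (x_mem _) (ih _ h)

lemma of_div (m : ThompsonF) (i : ℕ) (h : (gx i)⁻¹ * m ∈ pos gx) :
    (gact m)⁻¹ ((i : ℕ) : ℚ) + 1 < (gact m)⁻¹ ((i + 1 : ℕ) : ℚ) := by
  have hm : m = gx i * ((gx i)⁻¹ * m) := by simp
  rw [hm, gact_inv_mul, gact_inv_mul, fE_le _ _ le_rfl, fE_gt _ _ (by omega)]
  have h1 := gact_mono _ h i
  have h2 := gact_mono _ h (i + 1)
  linarith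

lemma gflag (i n : ℕ) (m : ThompsonF) (hin : i < n) (hi : (gx i)⁻¹ * m ∈ pos gx)
    (hn : (gx n)⁻¹ * m ∈ pos gx) : (gx (n + 1))⁻¹ * ((gx i)⁻¹ * m) ∈ pos gx := by
  apply div_of _ hi
  have h := of_div m n hn
  have hm : m = gx i * ((gx i)⁻¹ * m) := by simp
  rw [hm, gact_inv_mul, gact_inv_mul, fE_gt _ _ hin, fE_gt _ _ (by omega)] at h
  exact h

set_option linter.unusedSectionVars false

/-- Cells of dimension `k`, in gap coordinates. -/
inductive TCell : ℕ → Type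
  | nil : TCell 0
  | tcons {k : ℕ} (a : ℕ) (T : TCell k) : TCell (k + 1)

open TCell

/-- Shift of a cell. -/
def R (j : ℕ) : {k : ℕ} → TCell k → TCell k
  | _, .nil => .nil
  | _, .tcons a T => .tcons (a + j) T

lemma R_R (i j : ℕ) {k : ℕ} (S : TCell k) : R i (R j S) = R (j + i) S := by
  cases S with
  | nil => rfl
  | tcons a T => simp [R, add_assoc]

lemma R_tcons (j a : ℕ) {k : ℕ} (T : TCell k) : R j (tcons a T) = tcons (a + j) T := rfl

section Cx
variable {G : Type} [Group G] (x : ℕ → G)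

/-- Chains. -/
abbrev XX (G : Type) (k : ℕ) : Type := (G × TCell k) →₀ ℤ

/-- basis element -/
noncomputable abbrev bs {G : Type} {k : ℕ} (g : G) (S : TCell k) : XX G k := Finsupp.single (g, S) 1

/-- Shift on chains. -/
noncomputable def RX (G : Type) (j k : ℕ) : XX G k →ₗ[ℤ] XX G k :=
  Finsupp.lmapDomain ℤ ℤ (fun p => (p.1, R j p.2))

/-- Cons on chains. -/
noncomputable def CX (G : Type) (a k : ℕ) : XX G k →ₗ[ℤ] XX G (k + 1) :=
  Finsupp.lmapDomain ℤ ℤ (fun p => (p.1, tcons a p.2))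

/-- Right multiplication on chains. -/
noncomputable def MX (h : G) (k : ℕ) : XX G k →ₗ[ℤ] XX G k :=
  Finsupp.lmapDomain ℤ ℤ (fun p => (p.1 * h, p.2))

/-- Left multiplication on chains. -/
noncomputable def LX (h : G) (k : ℕ) : XX G k →ₗ[ℤ] XX G k :=
  Finsupp.lmapDomain ℤ ℤ (fun p => (h * p.1, p.2))

@[simp] lemma RX_bs (j k : ℕ) (g : G) (S : TCell k) : RX G j k (bs g S) = bs g (R j S) := by
  simp [RX]
@[simp] lemma CX_bs (a k : ℕ) (g : G) (S : TCell k) : CX G a k (bs g S) = bs g (tcons a S) := by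
  simp [CX]
@[simp] lemma MX_bs (h : G) (k : ℕ) (g : G) (S : TCell k) : MX h k (bs g S) = bs (g * h) S := by
  simp [MX]
@[simp] lemma LX_bs (h : G) (k : ℕ) (g : G) (S : TCell k) : LX h k (bs g S) = bs (h * g) S := by
  simp [LX]

lemma XX_ext {G : Type} {k : ℕ} {M : Type*} [AddCommGroup M] [Module ℤ M]
    {f f' : XX G k →ₗ[ℤ] M} (h : ∀ g S, f (bs g S) = f' (bs g S)) : f = f' := by
  apply Finsupp.lhom_ext'
  rintro ⟨g, S⟩
  ext
  exact h g S

/-- Boundary of a basis cell. -/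
noncomputable def dB : (k b : ℕ) → G → TCell (k + 1) → XX G k
  | 0, b, g, .tcons a T => bs g (R (a + 1) T) - bs (g * x (b + a)) (R (a + 2) T)
  | k + 1, b, g, .tcons a T => bs g (R (a + 1) T) - bs (g * x (b + a)) (R (a + 2) T)
      - CX G a k (dB k (b + a + 1) g T)

/-- Boundary operator. -/
noncomputable def dX (b k : ℕ) : XX G (k + 1) →ₗ[ℤ] XX G k :=
  Finsupp.linearCombination ℤ (fun p => dB x k b p.1 p.2)

@[simp] lemma dX_bs (b k : ℕ) (g : G) (S : TCell (k + 1)) :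
    dX x b k (bs g S) = dB x k b g S := by
  simp [dX]

lemma dX_RX (b j k : ℕ) : dX x b k ∘ₗ RX G j (k + 1) = RX G j k ∘ₗ dX x (b + j) k := by
  apply XX_ext
  intro g S
  cases S with | tcons a T =>
  have e1 : b + (a + j) = b + j + a := by ring
  cases k with
  | zero =>
    cases T
    simp [dB, R, e1]
  | succ k =>
    have e2 : ∀ y, CX G (a + j) k y = RX G j (k + 1) (CX G a k y) := by
      intro y
      rw [← LinearMap.comp_apply]
      congr 1
      apply XX_ext
      intro g S
      simp [R_tcons]
    have e3 : a + j + 1 = a + 1 + j := by ring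
    have e4 : a + j + 2 = a + 2 + j := by ring
    simp only [LinearMap.comp_apply, RX_bs, dX_bs, R_tcons, dB, map_sub, R_R, e1, e2, e3, e4]

lemma dX_LX (b k : ℕ) (h : G) : dX x b k ∘ₗ LX h (k + 1) = LX h k ∘ₗ dX x b k := by
  apply XX_ext
  intro g S
  simp only [LinearMap.comp_apply, LX_bs, dX_bs]
  induction k generalizing b with
  | zero =>
    cases S
    simp [dB, mul_assoc]
  | succ k ih =>
    cases S with | tcons a T =>
    have e2 : ∀ y, LX h (k + 1) (CX G a k y) = CX G a k (LX h k y) := by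
      intro y
      rw [← LinearMap.comp_apply, ← LinearMap.comp_apply]
      congr 1
      apply XX_ext
      intro g S
      simp
    simp only [dB, map_sub, e2, ih, LX_bs, mul_assoc]

lemma dX_MX (hx : ∀ i n, i < n → x n * x i = x i * x (n + 1)) (b m k : ℕ) (hm : m < b) :
    dX x (b + 1) k ∘ₗ MX (x m) (k + 1) = MX (x m) k ∘ₗ dX x b k := by
  apply XX_ext
  intro g S
  simp only [LinearMap.comp_apply, MX_bs, dX_bs]
  have e0 : ∀ b a, m < b → g * x m * x (b + 1 + a) = g * x (b + a) * x m := by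
    intro b a h
    rw [mul_assoc, mul_assoc, hx m (b + a) (by omega)]
    congr 3; omega
  induction k generalizing b with
  | zero =>
    cases S
    simp [dB, e0 _ _ hm]
  | succ k ih =>
    cases S with | tcons a T =>
    have e2 : ∀ y, MX (x m) (k + 1) (CX G a k y) = CX G a k (MX (x m) k y) := by
      intro y
      rw [← LinearMap.comp_apply, ← LinearMap.comp_apply]
      congr 1
      apply XX_ext
      intro g S
      simp
    have e3 : b + 1 + a + 1 = (b + a + 1) + 1 := by ring
    simp only [dB, map_sub, e2, e3, ih (b + a + 1) (by omega), MX_bs, e0 _ _ hm]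

lemma dX_CX (b a k : ℕ) (y : XX G (k + 1)) :
    dX x b (k + 1) (CX G a (k + 1) y) =
      RX G (a + 1) _ y - MX (x (b + a)) _ (RX G (a + 2) _ y) - CX G a k (dX x (b + a + 1) k y) := by
  suffices h : dX x b (k + 1) ∘ₗ CX G a (k + 1) =
      RX G (a + 1) _ - MX (x (b + a)) _ ∘ₗ RX G (a + 2) _ - CX G a k ∘ₗ dX x (b + a + 1) k from
    LinearMap.congr_fun h y
  apply XX_ext
  intro g S
  simp [dB]

lemma dX_dX (hx : ∀ i n, i < n → x n * x i = x i * x (n + 1)) (b k : ℕ) :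
    dX x b k ∘ₗ dX x b (k + 1) = 0 := by
  apply XX_ext
  intro g S
  simp only [LinearMap.comp_apply, dX_bs, LinearMap.zero_apply]
  induction k generalizing b with
  | zero =>
    cases S with | tcons a T =>
    cases T with | tcons c T =>
    cases T
    have e : x (b + a) * x (b + (c + (a + 2))) = x (b + (c + (a + 1))) * x (b + a) := by
      rw [hx (b + a) (b + (c + (a + 1))) (by omega)]
      congr 2
    have e' : b + a + 1 + c = b + (c + (a + 1)) := by ring
    simp only [dB, R, map_sub, dX_bs, CX_bs, mul_assoc, e, e']
    abel
  | succ k ih =>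
    cases S with | tcons a T =>
    have h1 := LinearMap.congr_fun (dX_RX x b (a + 1) (k + 1)) (bs g T)
    have h2 := LinearMap.congr_fun (dX_RX x b (a + 2) (k + 1)) (bs (g * x (b + a)) T)
    have h3 := LinearMap.congr_fun (dX_MX x hx (b + a + 1) (b + a) (k + 1) (by omega)) (bs g T)
    simp only [LinearMap.comp_apply, RX_bs, MX_bs] at h1 h2 h3
    have e2 : ∀ y, MX (x (b + a)) (k + 1) (RX G (a + 2) (k + 1) y) =
        RX G (a + 2) (k + 1) (MX (x (b + a)) (k + 1) y) := by
      intro y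
      rw [← LinearMap.comp_apply, ← LinearMap.comp_apply]
      congr 1
      apply XX_ext
      intro g S
      simp
    rw [dB, map_sub, map_sub, h1, h2, dX_CX, ih, e2, dX_bs, ← add_assoc, ← add_assoc]
    have e5 : b + a + 2 = b + a + 1 + 1 := rfl
    rw [e5, h3, dX_bs]
    simp

/-- augmentation -/
noncomputable def eps (G : Type) : XX G 0 →ₗ[ℤ] ℤ := Finsupp.linearCombination ℤ (fun _ => (1 : ℤ))

@[simp] lemma eps_bs (g : G) (S : TCell 0) : eps G (bs g S) = 1 := by simp [eps]

lemma eps_dX (b : ℕ) : eps G ∘ₗ dX x b 0 = 0 := by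
  apply XX_ext
  intro g S
  cases S
  simp [dB]

/-- Divisibility condition of a cell. -/
def Ok : {k : ℕ} → (b : ℕ) → (m : G) → TCell k → Prop
  | _, _, _, .nil => True
  | _, b, m, .tcons a T => (x (b + a))⁻¹ * m ∈ pos x ∧ Ok (b + a + 1) m T

lemma Ok_R {k : ℕ} (b j : ℕ) (m : G) (T : TCell k) : Ok x b m (R j T) ↔ Ok x (b + j) m T := by
  cases T with
  | nil => simp [R, Ok]
  | tcons a T =>
    have e : b + (a + j) = b + j + a := by ring
    simp [R, Ok, e]

lemma Ok_mul {k : ℕ} (b : ℕ) (m u : G) (hu : u ∈ pos x) (T : TCell k) (h : Ok x b m T) :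
    Ok x b (m * u) T := by
  induction T generalizing b with
  | nil => trivial
  | tcons a T ih =>
    refine ⟨?_, ih _ h.2⟩
    rw [← mul_assoc]
    exact mul_mem h.1 hu

variable (hx : ∀ i n, i < n → x n * x i = x i * x (n + 1))
  (flag : ∀ (i n : ℕ) (m : G), i < n → (x i)⁻¹ * m ∈ pos x →
    (x n)⁻¹ * m ∈ pos x → (x (n + 1))⁻¹ * ((x i)⁻¹ * m) ∈ pos x)
  (len : G →* Multiplicative ℤ) (hlen : ∀ i, len (x i) = Multiplicative.ofAdd 1)
  (hgen : Subgroup.closure (Set.range x) = ⊤)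

include hx in
lemma flag_symm (i n : ℕ) (m : G) (h : i < n) :
    (x i)⁻¹ * ((x n)⁻¹ * m) = (x (n + 1))⁻¹ * ((x i)⁻¹ * m) := by
  rw [← mul_assoc, ← mul_assoc, ← mul_inv_rev, ← mul_inv_rev, hx i n h]

include flag in
lemma Ok_shift {k : ℕ} (b i : ℕ) (m : G) (T : TCell k) (hi : i < b) (hm : (x i)⁻¹ * m ∈ pos x)
    (h : Ok x b m T) : Ok x (b + 1) ((x i)⁻¹ * m) T := by
  induction T generalizing b with
  | nil => trivial
  | tcons a T ih =>
    have e : b + 1 + a = b + a + 1 := by ring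
    refine ⟨?_, ?_⟩
    · rw [e]
      exact flag i (b + a) m (by omega) hm h.1
    · rw [e]
      exact ih _ (by omega) h.2

include hx hgen in
lemma exists_Ok {k : ℕ} (b : ℕ) (u : G) (T : TCell k) :
    ∃ m ∈ pos x, u * m ∈ pos x ∧ Ok x b (u * m) T := by
  induction T generalizing b with
  | nil =>
    obtain ⟨m, hm, h⟩ := ore hx hgen u
    exact ⟨m, hm, h, trivial⟩
  | tcons a T ih =>
    obtain ⟨m, hm, h1, h2⟩ := ih (b + a + 1)
    obtain ⟨m', hm', h'⟩ := ore hx hgen ((x (b + a))⁻¹ * (u * m))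
    refine ⟨m * m', mul_mem hm hm', ?_, ?_, ?_⟩
    · rw [← mul_assoc]; exact mul_mem h1 hm'
    · simpa [mul_assoc] using h'
    · rw [← mul_assoc]; exact Ok_mul x _ _ _ hm' _ h2

/-- length -/
def ln (m : G) : ℤ := Multiplicative.toAdd (len m)

include hlen in
lemma ln_x (i : ℕ) (m : G) : ln len ((x i)⁻¹ * m) = ln len m - 1 := by
  simp [ln, hlen]; ring

include hlen in
lemma ln_x' (i : ℕ) (m : G) : ln len (x i * m) = ln len m + 1 := by
  simp [ln, hlen]; ring

include hlen in
lemma ln_nonneg : ∀ m ∈ pos x, 0 ≤ ln len m := by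
  apply pos_ind
  · simp [ln]
  · intro i u hu h
    rw [ln_x' x len hlen]; omega

include hlen in
lemma ln_eq_zero : ∀ m ∈ pos x, ln len m ≤ 0 → m = 1 := by
  apply pos_ind
  · simp
  · intro i u hu _ h
    rw [ln_x' x len hlen] at h
    have := ln_nonneg x len hlen u hu
    omega

/-- The lower cells. -/
def Wset (h : G) (b k : ℕ) (g : G) : Set (G × TCell k) :=
  {p | p.1⁻¹ * h ∈ pos x ∧ Ok x b (p.1⁻¹ * h) p.2 ∧
    (∀ i < b, (x i)⁻¹ * (g⁻¹ * h) ∈ pos x → (x i)⁻¹ * (p.1⁻¹ * h) ∈ pos x) ∧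
    ln len (p.1⁻¹ * h) < ln len (g⁻¹ * h)}

/-- Same vertex part of the boundary. -/
noncomputable def d0 : (k : ℕ) → G → TCell (k + 1) → XX G k
  | 0, g, .tcons a T => bs g (R (a + 1) T)
  | k + 1, g, .tcons a T => bs g (R (a + 1) T) - CX G a k (d0 k g T)

lemma CX_mem {k a : ℕ} {s : Set (G × TCell k)} {t : Set (G × TCell (k + 1))}
    (h : ∀ p ∈ s, (p.1, tcons a p.2) ∈ t) (y : XX G k) (hy : y ∈ Finsupp.supported ℤ ℤ s) :
    CX G a k y ∈ Finsupp.supported ℤ ℤ t := by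
  rw [Finsupp.supported_eq_span_single] at hy
  induction hy using Submodule.span_induction with
  | mem y hy =>
    obtain ⟨p, hp, rfl⟩ := hy
    have := CX_bs a k p.1 p.2
    simp only [bs] at this
    erw [this]
    exact Finsupp.single_mem_supported ℤ _ (h p hp)
  | zero => simp
  | add y z _ _ hy hz => rw [map_add]; exact add_mem hy hz
  | smul c y _ hy => rw [map_smul]; exact Submodule.smul_mem _ _ hy

lemma RX_mem {k j : ℕ} {s t : Set (G × TCell k)}
    (h : ∀ p ∈ s, (p.1, R j p.2) ∈ t) (y : XX G k) (hy : y ∈ Finsupp.supported ℤ ℤ s) :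
    RX G j k y ∈ Finsupp.supported ℤ ℤ t := by
  rw [Finsupp.supported_eq_span_single] at hy
  induction hy using Submodule.span_induction with
  | mem y hy =>
    obtain ⟨p, hp, rfl⟩ := hy
    have := RX_bs j k p.1 p.2
    simp only [bs] at this
    erw [this]
    exact Finsupp.single_mem_supported ℤ _ (h p hp)
  | zero => simp
  | add y z _ _ hy hz => rw [map_add]; exact add_mem hy hz
  | smul c y _ hy => rw [map_smul]; exact Submodule.smul_mem _ _ hy

include hx flag hlen in
lemma low_mem (h g : G) (b a k : ℕ) (T : TCell k) (hS : Ok x b (g⁻¹ * h) (tcons a T)) :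
    (g * x (b + a), R (a + 2) T) ∈ Wset x len h b k g := by
  have e : (g * x (b + a))⁻¹ * h = (x (b + a))⁻¹ * (g⁻¹ * h) := by group
  refine ⟨?_, ?_, ?_, ?_⟩
  · dsimp only; rw [e]; exact hS.1
  · dsimp only; rw [e, Ok_R]
    exact Ok_shift x flag (b + a + 1) (b + a) _ _ (by omega) hS.1 hS.2
  · intro i hi hm
    dsimp only; rw [e, flag_symm x hx _ _ _ (by omega)]
    exact flag _ _ _ (by omega) hm hS.1
  · dsimp only; rw [e, ln_x x len hlen]; omega

include hx flag hlen in
lemma dB_sub_d0 (h g : G) (k b : ℕ) (S : TCell (k + 1))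
    (hS : Ok x b (g⁻¹ * h) S) :
    dB x k b g S - d0 k g S ∈ Finsupp.supported ℤ ℤ (Wset x len h b k g) := by
  induction k generalizing b with
  | zero =>
    cases S with | tcons a T =>
    have e : dB x 0 b g (tcons a T) - d0 0 g (tcons a T) = - bs (g * x (b + a)) (R (a + 2) T) := by
      simp only [dB, d0]; abel
    rw [e]
    exact neg_mem (Finsupp.single_mem_supported ℤ _ (low_mem x hx flag len hlen h g b a 0 T hS))
  | succ k ih =>
    cases S with | tcons a T =>
    have e : dB x (k + 1) b g (tcons a T) - d0 (k + 1) g (tcons a T) =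
        - bs (g * x (b + a)) (R (a + 2) T) - CX G a k (dB x k (b + a + 1) g T - d0 k g T) := by
      simp only [dB, d0, map_sub]; abel
    rw [e]
    refine sub_mem (neg_mem (Finsupp.single_mem_supported ℤ _
      (low_mem x hx flag len hlen h g b a _ T hS))) ?_
    refine CX_mem ?_ _ (ih (b + a + 1) T hS.2)
    rintro ⟨g', T'⟩ ⟨h1, h2, h3, h4⟩
    exact ⟨h1, ⟨h3 _ (by omega) hS.1, h2⟩, fun i hi => h3 i (by omega), h4⟩

lemma d0_mem (h g : G) (k b : ℕ) (S : TCell (k + 1)) (hS : Ok x b (g⁻¹ * h) S) :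
    d0 k g S ∈ Finsupp.supported ℤ ℤ {p : G × TCell k | p.1 = g ∧ Ok x b (g⁻¹ * h) p.2} := by
  induction k generalizing b with
  | zero =>
    cases S with | tcons a T =>
    refine Finsupp.single_mem_supported ℤ _ ⟨rfl, ?_⟩
    rw [Ok_R]
    exact hS.2
  | succ k ih =>
    cases S with | tcons a T =>
    refine sub_mem (Finsupp.single_mem_supported ℤ _ ⟨rfl, ?_⟩) ?_
    · dsimp only; rw [Ok_R]
      exact hS.2
    · refine CX_mem ?_ _ (ih (b + a + 1) T hS.2)
      rintro ⟨g', T'⟩ ⟨h1, h2⟩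
      exact ⟨h1, hS.1, h2⟩

/-- Good cells -/
def Good (h : G) (N k : ℕ) : Set (G × TCell k) :=
  {p | p.1⁻¹ * h ∈ pos x ∧ Ok x 0 (p.1⁻¹ * h) p.2 ∧ ln len (p.1⁻¹ * h) ≤ N}

/-- insertion -/
noncomputable def ins (a : ℕ) (g : G) : {k : ℕ} → TCell k → XX G (k + 1)
  | _, .nil => bs g (tcons a .nil)
  | _, .tcons c T => if c ≤ a then 0 else bs g (tcons a (tcons (c - a - 1) T))

lemma ins_R (a : ℕ) (g : G) {k : ℕ} (T : TCell k) : ins a g (R (a + 1) T) = bs g (tcons a T) := by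
  cases T with
  | nil => rfl
  | tcons c T =>
    have : c + (a + 1) - a - 1 = c := by omega
    have h2 : ¬ (c + (a + 1) ≤ a) := by omega
    simp [R, ins, this, h2]

open Classical in
/-- insertion operator on basis -/
noncomputable def HB (h : G) {k : ℕ} (g : G) (S : TCell k) : XX G (k + 1) :=
  if H : ∃ a, (x a)⁻¹ * (g⁻¹ * h) ∈ pos x then ins (Nat.find H) g S else 0

/-- insertion operator -/
noncomputable def HX (h : G) (k : ℕ) : XX G k →ₗ[ℤ] XX G (k + 1) :=
  Finsupp.linearCombination ℤ (fun p => HB x h p.1 p.2)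

@[simp] lemma HX_bs (h : G) (k : ℕ) (g : G) (S : TCell k) :
    HX x h k (bs g S) = HB x h g S := by
  simp [HX]

lemma HB_mem (h : G) (N k : ℕ) (g : G) (S : TCell k) (hg : (g, S) ∈ Good x len h N k) :
    HB x h g S ∈ Finsupp.supported ℤ ℤ (Good x len h N (k + 1)) := by
  classical
  obtain ⟨h1, h2, h3⟩ := hg
  dsimp only at h1 h2 h3
  rw [HB]
  split_ifs with H
  · have ha := Nat.find_spec H
    generalize Nat.find H = a at ha
    cases S with
    | nil =>
      refine Finsupp.single_mem_supported ℤ _ ⟨h1, ⟨?_, trivial⟩, h3⟩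
      simpa using ha
    | tcons c T =>
      rw [ins]
      split_ifs with hc
      · simp
      · refine Finsupp.single_mem_supported ℤ _ ⟨h1, ⟨?_, ?_⟩, h3⟩
        · simpa using ha
        · have e : 0 + a + 1 + (c - a - 1) = 0 + c := by omega
          rw [Ok, e]
          exact h2
  · simp

lemma HX_mem (h : G) (N k : ℕ) (y : XX G k)
    (hy : y ∈ Finsupp.supported ℤ ℤ (Good x len h N k)) :
    HX x h k y ∈ Finsupp.supported ℤ ℤ (Good x len h N (k + 1)) := by
  rw [Finsupp.supported_eq_span_single] at hy
  induction hy using Submodule.span_induction with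
  | mem y hy =>
    obtain ⟨p, hp, rfl⟩ := hy
    have := HX_bs x h k p.1 p.2
    simp only [bs] at this
    erw [this]
    exact HB_mem x len h N k p.1 p.2 hp
  | zero => simp
  | add y z _ _ hy hz => rw [map_add]; exact add_mem hy hz
  | smul c y _ hy => rw [map_smul]; exact Submodule.smul_mem _ _ hy

lemma vert_eq {k : ℕ} {k' : ℕ}
    (f f' : XX G k →ₗ[ℤ] XX G k') (g : G) (P : TCell k → Prop)
    (hf : ∀ S, P S → f (bs g S) = f' (bs g S)) (y : XX G k)
    (hy : y ∈ Finsupp.supported ℤ ℤ {p : G × TCell k | p.1 = g ∧ P p.2}) : f y = f' y := by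
  rw [Finsupp.supported_eq_span_single] at hy
  induction hy using Submodule.span_induction with
  | mem y hy =>
    obtain ⟨⟨g', S⟩, ⟨rfl, hp⟩, rfl⟩ := hy
    exact hf S hp
  | zero => simp
  | add y z _ _ hy hz => rw [map_add, map_add, hy, hz]
  | smul c y _ hy => rw [f.map_smul, f'.map_smul, hy]

lemma cell_cases {k : ℕ} (a : ℕ) (m : G) (S : TCell k)
    (hmin : ∀ c < a, ¬ (x c)⁻¹ * m ∈ pos x) (hS : Ok x 0 m S) :
    (∃ T, S = R (a + 1) T) ∨ (∃ (k' : ℕ) (e : k = k' + 1) (T : TCell k'), e ▸ S = tcons a T) := by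
  cases S with
  | nil => exact Or.inl ⟨.nil, rfl⟩
  | tcons c T =>
    rcases lt_trichotomy c a with h | h | h
    · exact absurd (by simpa using hS.1) (hmin c h)
    · subst h
      exact Or.inr ⟨_, rfl, T, rfl⟩
    · refine Or.inl ⟨tcons (c - a - 1) T, ?_⟩
      rw [R_tcons]
      congr 1
      omega

set_option maxHeartbeats 2000000 in
include hx flag hlen in
/-- main contraction step, positive degree -/
lemma step (h : G) (N k : ℕ) (g : G) (S : TCell (k + 1)) (hS : (g, S) ∈ Good x len h (N + 1) (k + 1)) :
    bs g S - dX x 0 (k + 1) (HX x h (k + 1) (bs g S)) - HX x h k (dX x 0 k (bs g S)) ∈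
      Finsupp.supported ℤ ℤ (Good x len h N (k + 1)) := by
  classical
  obtain ⟨h1, h2, h3⟩ := hS
  dsimp only at h1 h2 h3
  have H : ∃ a, (x a)⁻¹ * (g⁻¹ * h) ∈ pos x := by
    cases S with | tcons a T => exact ⟨0 + a, h2.1⟩
  obtain ⟨a, haeq⟩ : ∃ a, a = Nat.find H := ⟨_, rfl⟩
  have ha : (x a)⁻¹ * (g⁻¹ * h) ∈ pos x := haeq ▸ Nat.find_spec H
  have hmin : ∀ c < a, ¬ (x c)⁻¹ * (g⁻¹ * h) ∈ pos x := fun c hc => Nat.find_min H (haeq ▸ hc)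
  have HBg : ∀ {k : ℕ} (S : TCell k), HB x h g S = ins a g S := by
    intro k S
    rw [HB, dif_pos H, ← haeq]
  have WG : ∀ {k b : ℕ}, ∀ p ∈ Wset x len h b k g, (p.1, R b p.2) ∈ Good x len h N k := by
    rintro k b ⟨g', T'⟩ ⟨w1, w2, w3, w4⟩
    dsimp only at w1 w2 w3 w4
    refine ⟨w1, ?_, ?_⟩
    · dsimp only; rw [Ok_R]; simpa using w2
    · dsimp only; push_cast at h3; omega
  have WC : ∀ {k : ℕ}, ∀ p ∈ Wset x len h (a + 1) k g,
      (p.1, tcons a p.2) ∈ Good x len h N (k + 1) := by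
    rintro k ⟨g', T'⟩ ⟨w1, w2, w3, w4⟩
    dsimp only at w1 w2 w3 w4
    refine ⟨w1, ⟨?_, ?_⟩, ?_⟩
    · rw [zero_add]; exact w3 a (by omega) ha
    · rw [zero_add]; exact w2
    · dsimp only; push_cast at h3; omega
  have R0 : ∀ {k : ℕ} (T : TCell k), R 0 T = T := by
    intro k T; cases T <;> rfl
  have lowG : ∀ {k : ℕ} (T : TCell k), Ok x (a + 1) (g⁻¹ * h) T →
      bs (g * x a) (R (a + 2) T) ∈ Finsupp.supported ℤ ℤ (Good x len h N k) := by
    intro k T hT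
    have := WG (b := 0) _ (low_mem x hx flag len hlen h g 0 a k T ⟨by simpa using ha, by simpa using hT⟩)
    rw [R0, zero_add] at this
    exact Finsupp.single_mem_supported ℤ _ this
  rcases cell_cases x a _ S hmin h2 with ⟨T, rfl⟩ | ⟨k', e, T, hT⟩
  · have hT : Ok x (a + 1) (g⁻¹ * h) T := by
      rw [Ok_R, zero_add] at h2; exact h2
    have hL := dB_sub_d0 x hx flag len hlen h g k (a + 1) T hT
    have h0 := d0_mem x h g k (a + 1) T hT
    obtain ⟨L, hLe⟩ : ∃ L, L = dB x k (a + 1) g T - d0 k g T := ⟨_, rfl⟩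
    rw [← hLe] at hL
    have hd : dB x k (a + 1) g T = d0 k g T + L := by rw [hLe]; abel
    have e1 : dX x 0 k (bs g (R (a + 1) T)) = RX G (a + 1) k (d0 k g T) + RX G (a + 1) k L := by
      have := LinearMap.congr_fun (dX_RX x 0 (a + 1) k) (bs g T)
      simp only [LinearMap.comp_apply, RX_bs, zero_add] at this
      rw [this, dX_bs, hd, map_add]
    have e2 : HX x h k (RX G (a + 1) k (d0 k g T)) = CX G a k (d0 k g T) := by
      refine vert_eq (HX x h k ∘ₗ RX G (a + 1) k) (CX G a k) g _ ?_ _ h0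
      intro S _
      simp only [LinearMap.comp_apply, RX_bs, HX_bs, HBg, ins_R, CX_bs]
    rw [e1, map_add, e2, HX_bs, HBg, ins_R, dX_bs, dB, zero_add, hd, map_add]
    have e3 : bs g (R (a + 1) T) - (bs g (R (a + 1) T) - bs (g * x a) (R (a + 2) T) -
        (CX G a k (d0 k g T) + CX G a k L)) -
        (CX G a k (d0 k g T) + HX x h k (RX G (a + 1) k L)) =
        bs (g * x a) (R (a + 2) T) + CX G a k L - HX x h k (RX G (a + 1) k L) := by abel
    rw [e3]
    refine sub_mem (add_mem (lowG T hT) (CX_mem WC _ hL)) (HX_mem x len _ _ _ _ (RX_mem WG _ hL))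
  · obtain rfl : k = k' := by omega
    dsimp only at hT
    subst hT
    have hT : Ok x (a + 1) (g⁻¹ * h) T := by
      have := h2.2
      rwa [zero_add] at this
    have z : ins a g (tcons a T) = 0 := by simp [ins]
    rw [HX_bs, HBg, z, map_zero, sub_zero, dX_bs]
    cases k with
    | zero =>
      rw [dB, map_sub, HX_bs, HBg, ins_R, zero_add a]
      have e3 : bs g (tcons a T) - (bs g (tcons a T) - HX x h 0 (bs (g * x a) (R (a + 2) T))) =
        HX x h 0 (bs (g * x a) (R (a + 2) T)) := by abel
      rw [e3]
      exact HX_mem x len _ _ _ _ (lowG T hT)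
    | succ k =>
      have hL := dB_sub_d0 x hx flag len hlen h g k (a + 1) T hT
      have h0 := d0_mem x h g k (a + 1) T hT
      obtain ⟨L, hLe⟩ : ∃ L, L = dB x k (a + 1) g T - d0 k g T := ⟨_, rfl⟩
      rw [← hLe] at hL
      have hd : dB x k (a + 1) g T = d0 k g T + L := by rw [hLe]; abel
      have e2 : HX x h (k + 1) (CX G a k (d0 k g T)) = 0 := by
        refine vert_eq (HX x h (k + 1) ∘ₗ CX G a k) 0 g _ ?_ _ h0
        intro S _
        simp [HBg, ins]
      have e3 : ∀ u v w : XX G (k + 1 + 1), u - (u - v - (0 + w)) = v + w := by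
        intro u v w; abel
      rw [dB, map_sub, map_sub, HX_bs, HBg, ins_R, zero_add a, hd, map_add, map_add, e2, e3]
      exact add_mem (HX_mem x len _ _ _ _ (lowG T hT)) (HX_mem x len _ _ _ _ (CX_mem WC _ hL))

include hx flag hlen in
lemma step0 (h : G) (N : ℕ) (g : G) (S : TCell 0) (hS : (g, S) ∈ Good x len h (N + 1) 0) :
    bs g S - dX x 0 0 (HX x h 0 (bs g S)) ∈ Finsupp.supported ℤ ℤ (Good x len h N 0) := by
  classical
  obtain ⟨h1, h2, h3⟩ := hS
  dsimp only at h1 h2 h3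
  cases S
  rcases pos_cases _ h1 with hm | H
  · have H : ¬ ∃ a, (x a)⁻¹ * (g⁻¹ * h) ∈ pos x := by
      rintro ⟨a, ha⟩
      have := ln_nonneg x len hlen _ ha
      rw [ln_x x len hlen, hm] at this
      simp [ln] at this
    rw [HX_bs, HB, dif_neg H, map_zero, sub_zero]
    refine Finsupp.single_mem_supported ℤ _ ⟨h1, h2, ?_⟩
    change ln len (g⁻¹ * h) ≤ _
    rw [hm]; simp [ln]
  · rw [HX_bs, HB, dif_pos H]
    have ha := Nat.find_spec H
    generalize Nat.find H = a at ha
    rw [ins, dX_bs, dB]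
    have e : ∀ u v : XX G 0, u - (u - v) = v := by intro u v; abel
    have e' : R (a + 1) TCell.nil = .nil := rfl
    rw [e', e, zero_add]
    have eg : (g * x a)⁻¹ * h = (x a)⁻¹ * (g⁻¹ * h) := by group
    refine Finsupp.single_mem_supported ℤ _ ⟨?_, trivial, ?_⟩
    · change (g * x a)⁻¹ * h ∈ _; rw [eg]; exact ha
    · change ln len ((g * x a)⁻¹ * h) ≤ _; rw [eg, ln_x x len hlen]; push_cast at h3; omega

include hx hgen in
lemma exists_Good {k : ℕ} (z : XX G k) :
    ∃ h N, z ∈ Finsupp.supported ℤ ℤ (Good x len h N k) := by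
  classical
  suffices H : ∀ s : Finset (G × TCell k), ∃ h, ∀ p ∈ s, p.1⁻¹ * h ∈ pos x ∧ Ok x 0 (p.1⁻¹ * h) p.2 by
    obtain ⟨h, hh⟩ := H z.support
    refine ⟨h, z.support.sup (fun p => (ln len (p.1⁻¹ * h)).toNat), ?_⟩
    intro p hp
    refine ⟨(hh p hp).1, (hh p hp).2, ?_⟩
    have := Finset.le_sup (f := fun p : G × TCell k => (ln len (p.1⁻¹ * h)).toNat) hp
    omega
  intro s
  induction s using Finset.induction_on with
  | empty => exact ⟨1, by simp⟩
  | insert p s _ ih =>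
    obtain ⟨h, hh⟩ := ih
    obtain ⟨m, hm, h1, h2⟩ := exists_Ok x hx hgen 0 (p.1⁻¹ * h) p.2
    refine ⟨h * m, ?_⟩
    intro q hq
    rw [← mul_assoc]
    rcases Finset.mem_insert.1 hq with rfl | hq
    · exact ⟨h1, h2⟩
    · exact ⟨mul_mem (hh q hq).1 hm, Ok_mul x _ _ _ hm _ (hh q hq).2⟩

lemma span_map {k : ℕ} (s t : Set (G × TCell k)) (f : XX G k →ₗ[ℤ] XX G k)
    (hf : ∀ g S, (g, S) ∈ s → f (bs g S) ∈ Finsupp.supported ℤ ℤ t) (z : XX G k)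
    (hz : z ∈ Finsupp.supported ℤ ℤ s) : f z ∈ Finsupp.supported ℤ ℤ t := by
  rw [Finsupp.supported_eq_span_single] at hz
  induction hz using Submodule.span_induction with
  | mem y hy =>
    obtain ⟨p, hp, rfl⟩ := hy
    exact hf p.1 p.2 hp
  | zero => simp
  | add y z _ _ hy hz => rw [map_add]; exact add_mem hy hz
  | smul c y _ hy => rw [map_smul]; exact Submodule.smul_mem _ _ hy

include hx flag hlen hgen in
theorem exact_succ (k : ℕ) (z : XX G (k + 1)) (hz : dX x 0 k z = 0) :
    ∃ y, dX x 0 (k + 1) y = z := by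
  obtain ⟨h, N, hN⟩ := exists_Good x hx len hgen z
  induction N generalizing z with
  | zero =>
    refine ⟨0, ?_⟩
    rw [map_zero]
    symm
    rw [← Finsupp.support_eq_empty]
    rw [Finset.eq_empty_iff_forall_notMem]
    rintro ⟨g, S⟩ hp
    obtain ⟨h1, h2, h3⟩ := hN hp
    cases S with | tcons a T =>
    have h2' : Ok x 0 (g⁻¹ * h) (tcons a T) := h2
    change ln len (g⁻¹ * h) ≤ _ at h3
    have := ln_nonneg x len hlen _ h2'.1
    rw [ln_x x len hlen] at this
    push_cast at h3
    omega
  | succ N ih =>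
    have key := span_map _ _ (LinearMap.id - dX x 0 (k + 1) ∘ₗ HX x h (k + 1) -
      HX x h k ∘ₗ dX x 0 k) (fun g S hS => step x hx flag len hlen h N k g S hS) z hN
    simp only [LinearMap.sub_apply, LinearMap.id_apply, LinearMap.comp_apply, hz, map_zero,
      sub_zero] at key
    have dd := fun y => LinearMap.congr_fun (dX_dX x hx 0 k) y
    simp only [LinearMap.comp_apply, LinearMap.zero_apply] at dd
    obtain ⟨y, hy⟩ := ih _ (by rw [map_sub, hz, dd, sub_zero]) key
    exact ⟨y + HX x h (k + 1) z, by rw [map_add, hy]; abel⟩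

include hx flag hlen hgen in
theorem exact_zero (z : XX G 0) (hz : eps G z = 0) :
    ∃ y, dX x 0 0 y = z := by
  obtain ⟨h, N, hN⟩ := exists_Good x hx len hgen z
  induction N generalizing z with
  | zero =>
    refine ⟨0, ?_⟩
    rw [map_zero]
    have hs : z.support ⊆ {(h, TCell.nil)} := by
      rintro ⟨g, S⟩ hp
      obtain ⟨h1, h2, h3⟩ := hN hp
      cases S
      have := ln_eq_zero x len hlen _ h1 (by simpa using h3)
      dsimp only at this
      have : h = g := by rw [inv_mul_eq_one] at this; exact this.symm
      simp [this]
    rw [Finsupp.support_subset_singleton] at hs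
    rw [hs] at hz ⊢
    simp [eps] at hz
    rw [hz]; simp
  | succ N ih =>
    have key := span_map _ _ (LinearMap.id - dX x 0 0 ∘ₗ HX x h 0)
      (fun g S hS => step0 x hx flag len hlen h N g S hS) z hN
    simp only [LinearMap.sub_apply, LinearMap.id_apply, LinearMap.comp_apply] at key
    have dd := fun y => LinearMap.congr_fun (eps_dX x 0) y
    simp only [LinearMap.comp_apply, LinearMap.zero_apply] at dd
    obtain ⟨y, hy⟩ := ih _ (by rw [map_sub, hz, dd, sub_zero]) key
    exact ⟨y + HX x h 0 z, by rw [map_add, hy]; abel⟩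

end Cx

section Cochain

/-- Coboundary. -/
def dC : (k : ℕ) → (TCell k → ℤ) → TCell (k + 1) → ℤ
  | 0, f, .tcons a T => f (R (a + 1) T) - f (R (a + 2) T)
  | k + 1, f, .tcons a T => f (R (a + 1) T) - f (R (a + 2) T) - dC k (fun S => f (tcons a S)) T

lemma dC_zero (f : TCell 0 → ℤ) (S : TCell 1) : dC 0 f S = 0 := by
  cases S with | tcons a T =>
  cases T
  simp [dC, R]

lemma dC_add (k : ℕ) (f f' : TCell k → ℤ) : dC k (f + f') = dC k f + dC k f' := by
  funext S
  induction k with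
  | zero => simp [dC_zero]
  | succ k ih =>
    cases S with | tcons a T =>
    have := ih (fun S => f (tcons a S)) (fun S => f' (tcons a S)) T
    simp only [Pi.add_apply, dC] at this ⊢
    have e : (fun S => f (tcons a S) + f' (tcons a S)) =
      (fun S => f (tcons a S)) + (fun S => f' (tcons a S)) := rfl
    rw [e, this]; ring

lemma dC_smul (k : ℕ) (c : ℤ) (f : TCell k → ℤ) : dC k (c • f) = c • dC k f := by
  funext S
  induction k with
  | zero => simp [dC_zero]
  | succ k ih =>
    cases S with | tcons a T =>
    have := ih (fun S => f (tcons a S)) T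
    simp only [Pi.smul_apply, smul_eq_mul, dC] at this ⊢
    have e : (fun S => c * f (tcons a S)) = c • (fun S => f (tcons a S)) := rfl
    rw [e, this]; ring

/-- Coboundary as a linear map. -/
def dL (k : ℕ) : (TCell k → ℤ) →ₗ[ℤ] (TCell (k + 1) → ℤ) where
  toFun := dC k
  map_add' := dC_add k
  map_smul' := dC_smul k

/-- Cochain as a functional on chains. -/
noncomputable def pr (G : Type) {k : ℕ} (f : TCell k → ℤ) : XX G k →ₗ[ℤ] ℤ :=
  Finsupp.linearCombination ℤ (fun p => f p.2)

@[simp] lemma pr_bs {G : Type} {k : ℕ} (f : TCell k → ℤ) (g : G) (S : TCell k) :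
    pr G f (bs g S) = f S := by
  simp [pr]

lemma pr_dB {G : Type} [Group G] (x : ℕ → G) {k : ℕ} (f : TCell k → ℤ) (b : ℕ) (g : G)
    (S : TCell (k + 1)) : pr G f (dB x k b g S) = dC k f S := by
  induction k generalizing b with
  | zero =>
    cases S
    simp only [dB, dC, map_sub, pr_bs]
  | succ k ih =>
    cases S with | tcons a T =>
    have e : ∀ y, pr G f (CX G a k y) = pr G (fun S => f (tcons a S)) y := by
      intro y
      rw [← LinearMap.comp_apply]
      congr 1
      apply XX_ext
      intro g S
      simp
    simp only [dB, dC, map_sub, pr_bs, e, ih]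

lemma dC_dC (k : ℕ) (f : TCell k → ℤ) : dC (k + 1) (dC k f) = 0 := by
  funext S
  let x : ℕ → PUnit.{1} := fun _ => 1
  have h := LinearMap.congr_fun (dX_dX x (fun _ _ _ => rfl) 0 k) (bs 1 S)
  rw [← pr_dB x (dC k f) 0 1 S]
  have e : pr PUnit (dC k f) = pr PUnit f ∘ₗ dX x 0 k := by
    apply XX_ext
    intro g S
    simp [pr_dB]
  rw [e, LinearMap.comp_apply, ← dX_bs, ← LinearMap.comp_apply (dX x 0 k), h]
  simp

lemma dC_R (k : ℕ) (f : TCell k → ℤ) (j : ℕ) (T : TCell (k + 1)) :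
    dC k f (R j T) = dC k (fun S => f (R j S)) T := by
  cases k with
  | zero => simp [dC_zero]
  | succ k =>
    cases T with | tcons a T =>
    have e1 : a + j + 1 = a + 1 + j := by ring
    have e2 : a + j + 2 = a + 2 + j := by ring
    simp only [R_tcons, dC, R_R, e1, e2]

lemma dC_sub' (k : ℕ) (f f' : TCell k → ℤ) (T : TCell (k + 1)) :
    dC k (fun S => f S - f' S) T = dC k f T - dC k f' T :=
  congrFun (map_sub (dL k) f f') T

lemma dC_neg' (k : ℕ) (f : TCell k → ℤ) (T : TCell (k + 1)) :
    dC k (fun S => - f S) T = - dC k f T :=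
  congrFun (map_neg (dL k) f) T

lemma dC_z (k : ℕ) (T : TCell (k + 1)) : dC k (fun _ => 0) T = 0 :=
  congrFun (map_zero (dL k)) T

/-- Lift. -/
def Th {k : ℕ} (f : TCell k → ℤ) : TCell (k + 1) → ℤ
  | .tcons 0 _ => 0
  | .tcons (_ + 1) T => f T

/-- Projection. -/
def Ps {k : ℕ} : (TCell (k + 1) → ℤ) →ₗ[ℤ] (TCell k → ℤ) where
  toFun F := fun T => F (tcons 1 T) - F (tcons 0 (R 1 T))
  map_add' F F' := by funext T; simp; ring
  map_smul' c F := by funext T; simp; ring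

lemma Ps_Th {k : ℕ} (f : TCell k → ℤ) : Ps (Th f) = f := by
  funext T; simp [Ps, Th]

lemma dC_Th {k : ℕ} (f : TCell k → ℤ) : dC (k + 1) (Th f) = - Th (dC k f) := by
  funext S
  cases S with | tcons n T =>
  cases T with | tcons a T =>
  cases n with
  | zero => simp [dC, Th, R, dC_z]
  | succ n =>
    have e : (fun S => Th f (tcons (n + 1) S)) = f := rfl
    simp only [dC, e, R, Pi.neg_apply]
    have e1 : Th f (tcons (a + (n + 1 + 1)) T) = f T := rfl
    have e2 : Th f (tcons (a + (n + 1 + 2)) T) = f T := rfl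
    rw [e1, e2]; simp [Th]

lemma Th_inj {k : ℕ} (f : TCell k → ℤ) (h : Th f = 0) : f = 0 := by
  rw [← Ps_Th f, h, map_zero]

/-- The correcting cochain. -/
def hh {k : ℕ} (F : TCell (k + 2) → ℤ) : TCell (k + 1) → ℤ
  | .tcons n T => - ∑ a ∈ Finset.range (n - 1), F (tcons 0 (tcons a T))

lemma hh_rel {k : ℕ} (F : TCell (k + 2) → ℤ) (a : ℕ) (T : TCell k) :
    hh F (tcons (a + 1) T) - hh F (tcons (a + 2) T) = F (tcons 0 (tcons a T)) := by
  have e : a + 2 - 1 = a + 1 := rfl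
  have e' : a + 1 - 1 = a := rfl
  simp only [hh, e, e', Finset.sum_range_succ]; ring

lemma decomp {k : ℕ} (F : TCell (k + 2) → ℤ) (hF : dC (k + 2) F = 0) :
    F = dC (k + 1) (hh F) + Th (Ps F) := by
  have hd : ∀ (a : ℕ) (T : TCell (k + 1)), dC (k + 1) (hh F) (tcons a T) =
      F (tcons 0 (R a T)) - dC k (fun S => hh F (tcons a S)) T := by
    intro a T
    rw [dC]
    cases T with | tcons c T =>
    simp only [R_tcons]
    have := hh_rel F (c + a) T
    have e1 : c + a + 1 = c + (a + 1) := rfl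
    have e2 : c + a + 2 = c + (a + 2) := rfl
    rw [e1, e2] at this
    rw [this]
  have h0 : (fun S => hh F (tcons 0 S)) = fun _ => 0 := by funext S; simp [hh]
  have h1 : (fun S => hh F (tcons 1 S)) = fun _ => 0 := by funext S; simp [hh]
  funext S
  cases S with | tcons n T =>
  cases n with
  | zero =>
    have R0 : R 0 T = T := by cases T; rfl
    simp [hd, Th, h0, dC_z, R0]
  | succ n =>
    rw [Pi.add_apply, hd]
    have et : Th (Ps F) (tcons (n + 1) T) = F (tcons 1 T) - F (tcons 0 (R 1 T)) := rfl
    rw [et]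
    induction n with
    | zero => simp [h1, dC_z]
    | succ n ih =>
      have hc := congrFun hF (tcons 0 (tcons n T))
      have hs : dC k (fun S => F (tcons 0 (tcons n S))) T =
          dC k (fun S => hh F (tcons (n + 1) S)) T - dC k (fun S => hh F (tcons (n + 2) S)) T := by
        rw [← dC_sub']
        congr 1
        funext S
        rw [hh_rel]
      rw [dC, dC, hs] at hc
      simp only [R_tcons, Pi.zero_apply, zero_add] at hc
      have e1 : n + 1 + 1 = n + 2 := rfl
      rw [e1]
      have ih := ih rfl
      linarith

lemma Ps_dC {k : ℕ} (h : TCell (k + 1) → ℤ) :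
    Ps (dC (k + 1) h) = dC k (fun S => h (tcons 0 (R 1 S)) - h (tcons 1 S)) := by
  funext T
  rw [dC_sub', ← dC_R k (fun S => h (tcons 0 S)) 1 T]
  simp only [Ps, LinearMap.coe_mk, AddHom.coe_mk, dC, R_R]
  ring_nf

/-- The invariants. -/
def Ph : (k : ℕ) → (TCell (k + 1) → ℤ) →ₗ[ℤ] ℤ × ℤ
  | 0 => { toFun := fun F => (F (tcons 0 .nil), F (tcons 1 .nil))
           map_add' := fun _ _ => rfl
           map_smul' := fun _ _ => rfl }
  | k + 1 => Ph k ∘ₗ Ps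

lemma Ph_surj (k : ℕ) (v : ℤ × ℤ) : ∃ F, dC (k + 1) F = 0 ∧ Ph k F = v := by
  induction k with
  | zero =>
    let F : TCell 1 → ℤ := fun S => match S with
      | .tcons 0 _ => v.1
      | .tcons (_ + 1) _ => v.2
    refine ⟨F, ?_, rfl⟩
    funext S
    cases S with | tcons a T =>
    cases T with | tcons c T =>
    cases T
    rw [dC, dC_zero]
    have e1 : F (R (a + 1) (tcons c .nil)) = v.2 := rfl
    have e2 : F (R (a + 2) (tcons c .nil)) = v.2 := rfl
    rw [e1, e2]; simp
  | succ k ih =>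
    obtain ⟨f, h1, h2⟩ := ih
    refine ⟨Th f, ?_, ?_⟩
    · rw [dC_Th, h1]
      funext S
      cases S with | tcons a T => cases a <;> simp [Th]
    · rw [Ph, LinearMap.comp_apply, Ps_Th, h2]

lemma Ph_ker (k : ℕ) (F : TCell (k + 1) → ℤ) (hF : dC (k + 1) F = 0) :
    Ph k F = 0 ↔ ∃ h, dC k h = F := by
  induction k with
  | zero =>
    constructor
    · intro h
      have h0 : F (tcons 0 .nil) = 0 := congrArg Prod.fst h
      have h1 : F (tcons 1 .nil) = 0 := congrArg Prod.snd h
      refine ⟨0, ?_⟩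
      funext S
      rw [dC_zero]
      cases S with | tcons a T =>
      cases T
      have key : ∀ a, F (tcons (a + 1) .nil) = 0 := by
        intro a
        induction a with
        | zero => exact h1
        | succ a ih =>
          have := congrFun hF (tcons 0 (tcons a .nil))
          rw [dC, dC_zero] at this
          simp only [R_tcons, zero_add, Pi.zero_apply, ih] at this
          have e : a + 1 + 1 = a + 2 := rfl
          rw [e]; linarith
      cases a with
      | zero => exact h0.symm
      | succ a => exact (key a).symm
    · rintro ⟨h, rfl⟩
      have : dC 0 h = 0 := funext (dC_zero h)
      rw [this, map_zero]
  | succ k ih =>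
    have hdec := decomp F hF
    have hP : dC (k + 1) (Ps F) = 0 := by
      apply Th_inj
      have e : Th (Ps F) = F - dC (k + 1) (hh F) := by
        rw [eq_sub_iff_add_eq']; exact hdec.symm
      have h2 : dC (k + 1 + 1) (Th (Ps F)) = 0 := by
        rw [e]
        have := map_sub (dL (k + 2)) F (dC (k + 1) (hh F))
        refine this.trans ?_
        change dC _ F - dC _ (dC _ _) = 0
        rw [hF, dC_dC]; simp
      rw [dC_Th] at h2
      simpa using h2
    rw [Ph, LinearMap.comp_apply, ih (Ps F) hP]
    constructor
    · rintro ⟨g, hg⟩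
      refine ⟨hh F - Th g, ?_⟩
      refine (map_sub (dL (k + 1)) _ _).trans ?_
      change dC _ _ - dC _ _ = F
      rw [dC_Th, hg, sub_neg_eq_add]
      exact hdec.symm
    · rintro ⟨h, rfl⟩
      exact ⟨_, (Ps_dC h).symm⟩

end Cochain
section Glue
open CategoryTheory

/-- The representation on chains. -/
noncomputable def rho (G : Type) [Group G] (k : ℕ) : Representation ℤ G (XX G k) where
  toFun g := LX g k
  map_one' := by apply XX_ext; intro g S; simp
  map_mul' a b := by apply XX_ext; intro g S; simp [mul_assoc]

/-- The chain modules. -/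
noncomputable abbrev RP (G : Type) [Group G] (k : ℕ) : Rep.{0} ℤ G := Rep.of (rho G k)

/-- Linear maps out of chains. -/
noncomputable def liftL {G M : Type} {k : ℕ} {i1 : AddCommGroup M} {i2 : Module ℤ M}
    (v : G → TCell k → M) : XX G k →ₗ[ℤ] M :=
  Finsupp.linearCombination ℤ (fun p => v p.1 p.2)

lemma liftL_bs {G M : Type} {k : ℕ} {i1 : AddCommGroup M} {i2 : Module ℤ M}
    (v : G → TCell k → M) (g : G) (S : TCell k) : liftL v (bs g S) = v g S :=
  (Finsupp.linearCombination_single ℤ (1 : ℤ) (g, S)).trans (i2.one_smul (v g S))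

lemma XX_ext' {G M : Type} {k : ℕ} {i1 : AddCommGroup M} {i2 : Module ℤ M}
    {f f' : XX G k →ₗ[ℤ] M} (h : ∀ g S, f (bs g S) = f' (bs g S)) : f = f' := XX_ext h

/-- Intertwining maps out of chain modules. -/
noncomputable def liftI {G M : Type} [Group G] {k : ℕ} {i1 : AddCommGroup M} {i2 : Module ℤ M}
    (σ : Representation ℤ G M) (a : TCell k → M) : (rho G k).IntertwiningMap σ :=
  ⟨liftL (fun g S => σ g (a S)), by
    intro g
    apply XX_ext'
    intro h S
    change liftL (fun g S => σ g (a S)) (LX g k (bs h S)) =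
      σ g (liftL (fun g S => σ g (a S)) (bs h S))
    rw [LX_bs, liftL_bs, liftL_bs, map_mul]
    rfl⟩

lemma liftI_bs {G M : Type} [Group G] {k : ℕ} {i1 : AddCommGroup M} {i2 : Module ℤ M}
    (σ : Representation ℤ G M) (a : TCell k → M) (g : G) (S : TCell k) :
    liftI σ a (bs g S) = σ g (a S) := liftL_bs _ _ _

lemma int_bs {G M : Type} [Group G] {k : ℕ} {i1 : AddCommGroup M} {i2 : Module ℤ M}
    (σ : Representation ℤ G M) (f : (rho G k).IntertwiningMap σ) (g : G) (S : TCell k) :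
    f (bs g S) = σ g (f (bs 1 S)) := by
  have h := LinearMap.congr_fun (f.isIntertwining' g) (bs 1 S)
  refine Eq.trans ?_ h
  change f _ = f (LX g k (bs 1 S))
  simp

lemma int_ext {G M : Type} [Group G] {k : ℕ} {i1 : AddCommGroup M} {i2 : Module ℤ M}
    (σ : Representation ℤ G M) (f f' : (rho G k).IntertwiningMap σ)
    (h : ∀ S, f (bs 1 S) = f' (bs 1 S)) : f = f' := by
  apply Representation.IntertwiningMap.toLinearMap_injective
  apply XX_ext'
  intro g S
  change f (bs g S) = f' (bs g S)
  rw [int_bs, int_bs σ f', h]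

/-- Morphisms out of chain modules. -/
noncomputable def lift {G : Type} [Group G] {k : ℕ} (A : Rep.{0} ℤ G) (a : TCell k → A) :
    RP G k ⟶ A := (Rep.homEquiv).symm (liftI A.ρ a)

lemma lift_bs {G : Type} [Group G] {k : ℕ} (A : Rep.{0} ℤ G) (a : TCell k → A) (g : G)
    (S : TCell k) : (lift A a).hom (bs g S) = A.ρ g (a S) :=
  liftI_bs A.ρ a g S

lemma hom_bs {G : Type} [Group G] {k : ℕ} {A : Rep.{0} ℤ G} (f : RP G k ⟶ A) (g : G)
    (S : TCell k) : f.hom (bs g S) = A.ρ g (f.hom (bs 1 S)) := by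
  rw [← Rep.hom_comm_apply f g]
  congr 1
  change _ = LX g k _
  simp

lemma RP_ext {G : Type} [Group G] {k : ℕ} {A : Rep.{0} ℤ G} {f f' : RP G k ⟶ A}
    (h : ∀ S, f.hom (bs 1 S) = f'.hom (bs 1 S)) : f = f' :=
  Rep.hom_ext (int_ext A.ρ f.hom f'.hom h)

instance {G : Type} [Group G] (k : ℕ) : Projective (RP G k) where
  factors {E X} f e he := by
    rw [Rep.epi_iff_surjective] at he
    choose a ha using fun S : TCell k => he (f.hom (bs 1 S))
    refine ⟨lift E a, ?_⟩
    apply RP_ext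
    intro S
    rw [Rep.hom_comp]
    change e.hom ((lift E a).hom (bs 1 S)) = _
    rw [lift_bs, map_one]
    exact ha S

/-- differential -/
noncomputable def dR {G : Type} [Group G] (x : ℕ → G) (k : ℕ) : RP G (k + 1) ⟶ RP G k :=
  Rep.ofHom ⟨dX x 0 k, fun g => dX_LX x 0 k g⟩

lemma dR_apply {G : Type} [Group G] (x : ℕ → G) (k : ℕ) (z : XX G (k + 1)) :
    (dR x k).hom z = dX x 0 k z := rfl

/-- augmentation -/
noncomputable def eR (G : Type) [Group G] : RP G 0 ⟶ Rep.trivial ℤ G ℤ :=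
  Rep.ofHom ⟨eps G, fun g => by apply XX_ext; intro h S; simp [rho]⟩

lemma eR_apply (G : Type) [Group G] (z : XX G 0) : (eR G).hom z = eps G z := rfl

/-- The complex. -/
noncomputable def KK : ChainComplex (Rep.{0} ℤ ThompsonF) ℕ :=
  ChainComplex.of (fun k => RP ThompsonF k) (fun k => dR gx k) (by
    intro k
    apply RP_ext
    intro S
    exact LinearMap.congr_fun (dX_dX gx gx_rel 0 k) _)

lemma KK_d (k : ℕ) : KK.d (k + 1) k = dR gx k := ChainComplex.of_d _ _ _

lemma KK_eps : KK.d 1 0 ≫ eR ThompsonF = 0 := by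
  rw [KK_d]
  apply RP_ext
  intro S
  exact LinearMap.congr_fun (eps_dX gx 0) _

/-- augmentation as a chain map -/
noncomputable def KKpi : KK ⟶ (ChainComplex.single₀ (Rep.{0} ℤ ThompsonF)).obj
    (Rep.trivial ℤ ThompsonF ℤ) :=
  (KK.toSingle₀Equiv _).symm ⟨eR ThompsonF, KK_eps⟩

lemma KKpi_f : KKpi.f 0 = eR ThompsonF := ChainComplex.toSingle₀Equiv_symm_apply_f_zero _ _

lemma rep_exact {R G : Type} [CommRing R] [Group G] (S : ShortComplex (Rep.{0} R G))
    (h : ∀ z : S.X₂, Rep.Hom.hom S.g z = 0 → ∃ y, Rep.Hom.hom S.f y = z) : S.Exact := by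
  apply (forget₂ _ (ModuleCat R)).reflects_exact_of_faithful
  rw [ShortComplex.moduleCat_exact_iff]
  exact h

lemma KK_quasi : QuasiIso KKpi where
  quasiIsoAt m := by
    induction m with
    | zero =>
      rw [ChainComplex.quasiIsoAt₀_iff, ShortComplex.quasiIso_iff_of_zeros' _ rfl rfl rfl]
      constructor
      · apply rep_exact
        intro z hz
        change (KKpi.f 0).hom z = 0 at hz
        rw [KKpi_f] at hz
        obtain ⟨y, hy⟩ := exact_zero gx gx_rel gflag glen glen_gx gx_gen z hz
        refine ⟨y, ?_⟩
        change (KK.d 1 0).hom y = z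
        rw [KK_d]
        exact hy
      · change Epi (KKpi.f 0)
        rw [KKpi_f]
        change Epi (eR ThompsonF)
        rw [Rep.epi_iff_surjective]
        intro (c : ℤ)
        refine ⟨c • (bs 1 .nil : XX ThompsonF 0), ?_⟩
        rw [eR_apply, map_smul, eps_bs]
        simp
    | succ m _ =>
      rw [quasiIsoAt_iff_exactAt' (hL := ChainComplex.exactAt_succ_single_obj ..),
          HomologicalComplex.exactAt_iff' _ (m + 2) (m + 1) m (by simp) (by simp)]
      apply rep_exact
      intro z hz
      change (KK.d (m + 1) m).hom z = 0 at hz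
      rw [KK_d] at hz
      obtain ⟨y, hy⟩ := exact_succ gx gx_rel gflag glen glen_gx gx_gen m z hz
      refine ⟨y, ?_⟩
      change (KK.d (m + 2) (m + 1)).hom y = z
      rw [KK_d]
      exact hy

/-- The resolution. -/
noncomputable def PR : ProjectiveResolution (Rep.trivial ℤ ThompsonF ℤ) where
  complex := KK
  projective k := inferInstanceAs (Projective (RP ThompsonF k))
  π := KKpi
  quasiIso := KK_quasi

lemma sc_equiv {A W : Type} [CommRing A] [AddCommGroup W] [Module A W]
    (S : ShortComplex (ModuleCat.{0} A)) (φ : S.X₂ →ₗ[A] W)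
    (h1 : ∀ v, ∃ z, S.g.hom z = 0 ∧ φ z = v)
    (h2 : ∀ z, S.g.hom z = 0 → (φ z = 0 ↔ ∃ y, S.f.hom y = z)) :
    Nonempty (S.homology ≃ₗ[A] W) := by
  let ψ : LinearMap.ker S.g.hom →ₗ[A] W := φ ∘ₗ (LinearMap.ker S.g.hom).subtype
  have hs : Function.Surjective ψ := by
    intro v
    obtain ⟨z, hz, hv⟩ := h1 v
    exact ⟨⟨z, hz⟩, hv⟩
  have hk : LinearMap.range S.moduleCatToCycles = LinearMap.ker ψ := by
    ext ⟨z, hz⟩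
    rw [LinearMap.mem_ker]
    change _ ↔ φ z = 0
    rw [h2 z hz]
    constructor
    · rintro ⟨y, hy⟩
      exact ⟨y, congrArg Subtype.val hy⟩
    · rintro ⟨y, hy⟩
      exact ⟨y, Subtype.ext hy⟩
  exact ⟨S.moduleCatHomologyIso.toLinearEquiv ≪≫ₗ
    (Submodule.quotEquivOfEq _ _ hk ≪≫ₗ ψ.quotKerEquivOfSurjective hs)⟩

/-- evaluation on cells -/
noncomputable def ev (k : ℕ) : (RP ThompsonF k ⟶ Rep.trivial ℤ ThompsonF ℤ) →ₗ[ℤ] (TCell k → ℤ) where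
  toFun f := fun S => f.hom (bs 1 S)
  map_add' f f' := rfl
  map_smul' c f := rfl

lemma ev_lift (k : ℕ) (a : TCell k → ℤ) : ev k (lift (Rep.trivial ℤ ThompsonF ℤ) a) = a := by
  funext S
  change (lift (Rep.trivial ℤ ThompsonF ℤ) a).hom (bs 1 S) = _
  rw [lift_bs]; simp

lemma ev_inj (k : ℕ) {f f' : RP ThompsonF k ⟶ Rep.trivial ℤ ThompsonF ℤ}
    (h : ev k f = ev k f') : f = f' :=
  RP_ext (fun S => congrFun h S)

lemma ev_d (k : ℕ) (f : RP ThompsonF k ⟶ Rep.trivial ℤ ThompsonF ℤ) :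
    ev (k + 1) (dR gx k ≫ f) = dC k (ev k f) := by
  funext S
  change f.hom ((dR gx k).hom (bs 1 S)) = _
  rw [dR_apply, dX_bs, ← pr_dB gx (ev k f) 0 1 S]
  generalize dB gx k 0 1 S = z
  have : f.hom.toLinearMap = pr ThompsonF (ev k f) := by
    apply XX_ext
    intro g S
    rw [pr_bs]
    exact (hom_bs f g S)
  exact LinearMap.congr_fun this z

lemma d_eq (n : ℕ) (y : RP ThompsonF n ⟶ Rep.trivial ℤ ThompsonF ℤ)
    (z : RP ThompsonF (n + 1) ⟶ Rep.trivial ℤ ThompsonF ℤ) (h : dC n (ev n y) = ev (n + 1) z) :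
    KK.d (n + 1) n ≫ y = z := by
  rw [KK_d]
  refine ev_inj (n + 1) ?_
  exact (ev_d n y).trans h

lemma d_eq' (n : ℕ) (y : RP ThompsonF n ⟶ Rep.trivial ℤ ThompsonF ℤ)
    (z : RP ThompsonF (n + 1) ⟶ Rep.trivial ℤ ThompsonF ℤ) (h : KK.d (n + 1) n ≫ y = z) :
    dC n (ev n y) = ev (n + 1) z := by
  rw [KK_d] at h
  exact (ev_d n y).symm.trans (congrArg _ h)

lemma d_eq_zero (n : ℕ) (y : RP ThompsonF n ⟶ Rep.trivial ℤ ThompsonF ℤ)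
    (h : dC n (ev n y) = 0) : KK.d (n + 1) n ≫ y = 0 :=
  d_eq n y 0 (h.trans (map_zero _).symm)

lemma d_eq_zero' (n : ℕ) (y : RP ThompsonF n ⟶ Rep.trivial ℤ ThompsonF ℤ)
    (h : KK.d (n + 1) n ≫ y = 0) : dC n (ev n y) = 0 :=
  (d_eq' n y 0 h).trans (map_zero _)

lemma main (n : ℕ) :
    Nonempty ((groupCohomology (Rep.trivial ℤ ThompsonF ℤ) (n + 1)) ≃ₗ[ℤ] (ℤ × ℤ)) := by
  have i1 := groupCohomologyIso (Rep.trivial ℤ ThompsonF ℤ) (n + 1) PR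
  have i2 := (PR.complex.linearYonedaObj ℤ (Rep.trivial ℤ ThompsonF ℤ)).homologyIsoSc'
    n (n + 1) (n + 2) (by simp) (by simp)
  obtain ⟨e⟩ := sc_equiv ((PR.complex.linearYonedaObj ℤ (Rep.trivial ℤ ThompsonF ℤ)).sc'
    n (n + 1) (n + 2)) (W := ℤ × ℤ)
    { toFun := fun z => Ph n (ev (n + 1) z)
      map_add' := fun z w => ((Ph n) ∘ₗ ev (n + 1)).map_add z w
      map_smul' := fun c z => ((Ph n) ∘ₗ ev (n + 1)).map_smul c z } (by
      intro v
      obtain ⟨F, h1, h2⟩ := Ph_surj n v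
      refine ⟨lift (Rep.trivial ℤ ThompsonF ℤ) F, ?_, ?_⟩
      · exact d_eq_zero _ _ (by rw [ev_lift, h1])
      · rw [← h2]
        exact congrArg _ (ev_lift _ F)) (by
      intro (z : RP ThompsonF (n + 1) ⟶ Rep.trivial ℤ ThompsonF ℤ) hz
      refine (Ph_ker n _ (d_eq_zero' _ _ hz)).trans ?_
      constructor
      · rintro ⟨h, hh⟩
        refine ⟨lift (Rep.trivial ℤ ThompsonF ℤ) h, ?_⟩
        exact d_eq _ _ _ (by rw [ev_lift, hh])
      · rintro ⟨y, hy⟩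
        exact ⟨ev n y, d_eq' _ _ _ hy⟩)
  exact ⟨(i1 ≪≫ i2).toLinearEquiv ≪≫ₗ e⟩

end Glue


end ThF

/-- For every `n ≥ 1`, the integral group cohomology `Hⁿ(F; ℤ)` of Thompson's group `F`
(with trivial `ℤ` coefficients) is free abelian of rank 2, i.e. isomorphic to `ℤ × ℤ`. -/
theorem thompsonF_cohomology (n : ℕ) (hn : 1 ≤ n) :
    Nonempty ((groupCohomology (Rep.trivial ℤ ThompsonF ℤ) n) ≃ₗ[ℤ] (ℤ × ℤ)) := by
  obtain ⟨m, rfl⟩ : ∃ m, n = m + 1 := ⟨n - 1, by omega⟩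
  exact ThF.main m
end
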